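/- Let R be a commutative ring and let C be a compact object of D(R). Then there exists a finitely generated ideal I ⊆ R such that Loc(C) = Loc(R/I). -/

import Mathlib

open CategoryTheory CategoryTheory.Limits CategoryTheory.Pretriangulated ZeroObject

universe w w' v u

section TriangulatedDefs

variable {T : Type u} [Category.{v} T] [Preadditive T] [HasZeroObject T]
  [HasShift T ℤ] [∀ n : ℤ, (shiftFunctor T n).Additive] [Pretriangulated T]

/-- A localizing subcategory of a (pre)triangulated category, encoded as a set of
objects: it is closed under isomorphisms, contains the zero object, is stable
under shifts, closed under cones of distinguished triangles (hence a full
triangulated subcategory), and closed under arbitrary small coproducts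
(phrased via colimit cofans, so that no global existence of coproducts
is needed). -/
structure IsLocalizingSub (S : Set T) : Prop where
  zero_mem : (0 : T) ∈ S
  mem_of_iso : ∀ {x y : T}, (x ≅ y) → x ∈ S → y ∈ S
  shift_mem : ∀ (n : ℤ) {x : T}, x ∈ S → x⟦n⟧ ∈ S
  cone_mem : ∀ (Tr : Triangle T), Tr ∈ distinguishedTriangles →
    Tr.obj₁ ∈ S → Tr.obj₂ ∈ S → Tr.obj₃ ∈ S
  coprod_mem : ∀ {ι : Type w} (f : ι → T) (c : Cofan f), IsColimit c →
    (∀ i, f i ∈ S) → c.pt ∈ S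

/-- A colocalizing subcategory: as `IsLocalizingSub` but with products instead
of coproducts. -/
structure IsColocalizingSub (S : Set T) : Prop where
  zero_mem : (0 : T) ∈ S
  mem_of_iso : ∀ {x y : T}, (x ≅ y) → x ∈ S → y ∈ S
  shift_mem : ∀ (n : ℤ) {x : T}, x ∈ S → x⟦n⟧ ∈ S
  cone_mem : ∀ (Tr : Triangle T), Tr ∈ distinguishedTriangles →
    Tr.obj₁ ∈ S → Tr.obj₂ ∈ S → Tr.obj₃ ∈ S
  prod_mem : ∀ {ι : Type w} (f : ι → T) (c : Fan f), IsLimit c →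
    (∀ i, f i ∈ S) → c.pt ∈ S

/-- `Loc S`: the smallest localizing subcategory containing the set of
objects `S` (the intersection of all localizing subcategories containing it). -/
def Loc (S : Set T) : Set T :=
  ⋂₀ {L : Set T | IsLocalizingSub.{w} L ∧ S ⊆ L}

/-- The right orthogonal of a set of objects. -/
def rightOrth (C : Set T) : Set T :=
  {x : T | ∀ ⦃c : T⦄, c ∈ C → ∀ (g : c ⟶ x), g = 0}

end TriangulatedDefs

section CompactDefs

variable {T : Type u} [Category.{v} T] [Preadditive T]

/-- The canonical comparison map `⨁ᵢ Hom(x, fᵢ) →+ Hom(x, ∐ f)` associated to a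
cofan `c` on a family `f`. -/
noncomputable def cofanHomComparison {ι : Type w} (x : T) (f : ι → T) (c : Cofan f) :
    (Π₀ i, (x ⟶ f i)) →+ (x ⟶ c.pt) :=
  letI := Classical.decEq ι
  DFinsupp.sumAddHom (fun i => AddMonoidHom.mk' (fun φ => φ ≫ c.inj i)
    (fun φ ψ => Preadditive.add_comp _ _ _ φ ψ (c.inj i)))

/-- An object `x` is compact if `Hom(x, -)` commutes with arbitrary small
coproducts, i.e. for every colimit cofan on a family `f`, the canonical map
`⨁ᵢ Hom(x, fᵢ) → Hom(x, ∐ f)` is bijective. -/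
def IsCompactObj (x : T) : Prop :=
  ∀ ⦃ι : Type w⦄ (f : ι → T) (c : Cofan f), IsColimit c →
    Function.Bijective (cofanHomComparison x f c)

end CompactDefs

section DR

variable (R : Type u) [CommRing R] [HasDerivedCategory.{w'} (ModuleCat.{u} R)]

/-- The `R`-module `M`, regarded as an object of the derived category `D(R)`,
as a complex concentrated in degree `0`. -/
noncomputable def smod (M : ModuleCat.{u} R) : DerivedCategory (ModuleCat.{u} R) :=
  (DerivedCategory.singleFunctor (ModuleCat.{u} R) 0).obj M

end DR

section PartA1
open DirectSum

def DMIsSES {S : Type u} [CommRing S] {M₁ M₂ M₃ : Type u} [AddCommGroup M₁] [AddCommGroup M₂]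
    [AddCommGroup M₃] [Module S M₁] [Module S M₂] [Module S M₃]
    (d₁ : M₁ →ₗ[S] M₁) (d₂ : M₂ →ₗ[S] M₂) (d₃ : M₃ →ₗ[S] M₃) : Prop :=
  (∀ x, d₂ (d₂ x) = 0) ∧ ∃ (f : M₁ →ₗ[S] M₂) (g : M₂ →ₗ[S] M₃),
    (∀ x, f (d₁ x) = d₂ (f x)) ∧ (∀ x, g (d₂ x) = d₃ (g x)) ∧
    Function.Injective f ∧ Function.Surjective g ∧ ∀ x, g x = 0 ↔ ∃ y, f y = x

abbrev DMPred (S : Type u) [CommRing S] :=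
  ∀ (M : Type u) [AddCommGroup M] [Module S M], (M →ₗ[S] M) → Prop

structure DMClass {S : Type u} [CommRing S] (P : DMPred S) : Prop where
  sq : ∀ (M : Type u) [AddCommGroup M] [Module S M] (d : M →ₗ[S] M), P M d → ∀ x, d (d x) = 0
  acyclic : ∀ (M : Type u) [AddCommGroup M] [Module S M] (d : M →ₗ[S] M),
    (∀ x, d (d x) = 0) → (∀ x, d x = 0 → ∃ y, d y = x) → P M d
  ses₁ : ∀ (M₁ M₂ M₃ : Type u) [AddCommGroup M₁] [AddCommGroup M₂]
    [AddCommGroup M₃] [Module S M₁] [Module S M₂] [Module S M₃]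
    (d₁ : M₁ →ₗ[S] M₁) (d₂ : M₂ →ₗ[S] M₂) (d₃ : M₃ →ₗ[S] M₃),
    DMIsSES d₁ d₂ d₃ → P M₂ d₂ → P M₃ d₃ → P M₁ d₁
  ses₂ : ∀ (M₁ M₂ M₃ : Type u) [AddCommGroup M₁] [AddCommGroup M₂]
    [AddCommGroup M₃] [Module S M₁] [Module S M₂] [Module S M₃]
    (d₁ : M₁ →ₗ[S] M₁) (d₂ : M₂ →ₗ[S] M₂) (d₃ : M₃ →ₗ[S] M₃),
    DMIsSES d₁ d₂ d₃ → P M₁ d₁ → P M₃ d₃ → P M₂ d₂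
  ses₃ : ∀ (M₁ M₂ M₃ : Type u) [AddCommGroup M₁] [AddCommGroup M₂]
    [AddCommGroup M₃] [Module S M₁] [Module S M₂] [Module S M₃]
    (d₁ : M₁ →ₗ[S] M₁) (d₂ : M₂ →ₗ[S] M₂) (d₃ : M₃ →ₗ[S] M₃),
    DMIsSES d₁ d₂ d₃ → P M₁ d₁ → P M₂ d₂ → P M₃ d₃
  dsum : ∀ (ι : Type u) (M : ι → Type u) [∀ i, AddCommGroup (M i)] [∀ i, Module S (M i)]
    (d : ∀ i, M i →ₗ[S] M i), (∀ i, P (M i) (d i)) → P (⨁ i, M i) (DirectSum.lmap d)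

namespace DMClass

variable {S : Type u} [CommRing S] {P : DMPred S} (hP : DMClass P)
include hP

lemma of_subsingleton (M : Type u) [AddCommGroup M] [Module S M] [Subsingleton M]
    (d : M →ₗ[S] M) : P M d :=
  hP.acyclic M d (fun _ => Subsingleton.elim _ _) (fun x _ => ⟨x, Subsingleton.elim _ _⟩)

lemma of_equiv {M N : Type u} [AddCommGroup M] [Module S M] [AddCommGroup N] [Module S N]
    {d : M →ₗ[S] M} {d' : N →ₗ[S] N} (e : M ≃ₗ[S] N) (he : ∀ x, e (d x) = d' (e x))
    (h : P M d) : P N d' := by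
  have hsq := hP.sq _ _ h
  refine hP.ses₂ M N PUnit.{u+1} d d' 0 ⟨fun x => ?_, e.toLinearMap, 0, fun x => he x,
    fun x => rfl, e.injective, fun x => ⟨0, rfl⟩, fun x => ?_⟩ h (hP.of_subsingleton _ _)
  · obtain ⟨x, rfl⟩ := e.surjective x
    rw [← he, ← he, hsq, map_zero]
  · exact ⟨fun _ => e.surjective x, fun _ => rfl⟩

lemma dsum_nat (M : ℕ → Type u) [∀ i, AddCommGroup (M i)] [∀ i, Module S (M i)]
    (d : ∀ i, M i →ₗ[S] M i) (h : ∀ i, P (M i) (d i)) :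
    P (⨁ i, M i) (DirectSum.lmap d) := by
  have h1 := hP.dsum (ULift.{u} ℕ) (fun i => M i.down) (fun i => d i.down) (fun i => h i.down)
  let φ : (⨁ i : ULift.{u} ℕ, M i.down) →ₗ[S] ⨁ i, M i :=
    DirectSum.toModule S _ _ (fun i => DirectSum.lof S ℕ M i.down)
  let ψ : (⨁ i, M i) →ₗ[S] (⨁ i : ULift.{u} ℕ, M i.down) :=
    DirectSum.toModule S _ _ (fun i => DirectSum.lof S (ULift.{u} ℕ) (fun i => M i.down) ⟨i⟩)
  refine hP.of_equiv (LinearEquiv.ofLinearMap φ ψ ?_ ?_) ?_ h1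
  · ext i x : 2
    simp [φ, ψ]
  · ext i x : 2
    simp only [LinearMap.comp_apply, φ, ψ, DirectSum.toModule_lof, LinearMap.id_apply]
  · intro x
    have : φ ∘ₗ (DirectSum.lmap (fun i : ULift.{u} ℕ => d i.down)) = DirectSum.lmap d ∘ₗ φ := by
      ext i x : 2
      simp only [LinearMap.comp_apply, φ, DirectSum.toModule_lof, DirectSum.lmap_lof]
    exact LinearMap.congr_fun this x

end DMClass

section telescope
variable {S : Type u} [CommRing S]

inductive DMDies {M : ℕ → Type u} [∀ i, AddCommGroup (M i)] [∀ i, Module S (M i)]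
    (t : ∀ n, M n →ₗ[S] M (n+1)) : ∀ n, M n → Prop
  | zero (n : ℕ) : DMDies t n 0
  | step (n : ℕ) (x : M n) : DMDies t (n+1) (t n x) → DMDies t n x

variable {M : ℕ → Type u} [∀ i, AddCommGroup (M i)] [∀ i, Module S (M i)]
    (t : ∀ n, M n →ₗ[S] M (n+1))

noncomputable def telShift : (⨁ n, M n) →ₗ[S] (⨁ n, M n) :=
  DirectSum.toModule S _ _ (fun n => DirectSum.lof S ℕ M (n+1) ∘ₗ t n)

lemma telShift_lof (n : ℕ) (x : M n) :
    telShift t (DirectSum.lof S ℕ M n x) = DirectSum.lof S ℕ M (n+1) (t n x) := by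
  simp [telShift, DirectSum.toModule_lof]

lemma telShift_zero (x : ⨁ n, M n) : telShift t x 0 = 0 := by
  induction x using DirectSum.induction_on with
  | zero => simp
  | of i x =>
    rw [← DirectSum.lof_eq_of S, telShift_lof, DirectSum.lof_eq_of,
      DirectSum.of_eq_of_ne _ _ _ (by simp)]
  | add x y hx hy => rw [map_add, DirectSum.add_apply, hx, hy, add_zero]

lemma telShift_succ (x : ⨁ n, M n) (n : ℕ) : telShift t x (n+1) = t n (x n) := by
  induction x using DirectSum.induction_on with
  | zero => simp
  | of i x =>
    rw [← DirectSum.lof_eq_of S, telShift_lof, DirectSum.lof_eq_of]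
    by_cases h : n = i
    · subst h
      rw [DirectSum.of_eq_same, DirectSum.lof_eq_of, DirectSum.of_eq_same]
    · rw [DirectSum.of_eq_of_ne _ _ _ (by simpa using h), DirectSum.lof_eq_of,
       DirectSum.of_eq_of_ne _ _ _ h, map_zero]
  | add x y hx hy => rw [map_add, DirectSum.add_apply, hx, hy, DirectSum.add_apply, map_add]

noncomputable def telMap : (⨁ n, M n) →ₗ[S] (⨁ n, M n) := LinearMap.id - telShift t

lemma telMap_inj : Function.Injective (telMap t) := by
  rw [← LinearMap.ker_eq_bot, LinearMap.ker_eq_bot']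
  intro x hx
  have h : x = telShift t x := by simpa [telMap, sub_eq_zero] using hx
  have h2 : ∀ n, x n = 0 := by
    intro n
    induction n with
    | zero => rw [h, telShift_zero]
    | succ n ih => rw [h, telShift_succ, ih, map_zero]
  exact DFinsupp.ext h2

lemma tel_raise (n m : ℕ) (h : n ≤ m) (x : M n) :
    ∃ y, DirectSum.lof S ℕ M n x - DirectSum.lof S ℕ M m y ∈ LinearMap.range (telMap t) := by
  induction m, h using Nat.le_induction with
  | base => exact ⟨x, by simp⟩
  | succ m hm ih =>
    obtain ⟨y, hy⟩ := ih
    refine ⟨t m y, ?_⟩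
    have : DirectSum.lof S ℕ M m y - DirectSum.lof S ℕ M (m+1) (t m y) ∈
      LinearMap.range (telMap t) := ⟨DirectSum.lof S ℕ M m y, by simp [telMap, telShift_lof]⟩
    simpa using add_mem hy this

lemma tel_single (x : ⨁ n, M n) :
    ∃ n y, x - DirectSum.lof S ℕ M n y ∈ LinearMap.range (telMap t) := by
  induction x using DirectSum.induction_on with
  | zero => exact ⟨0, 0, by simp⟩
  | of i x => exact ⟨i, x, by simp [DirectSum.lof_eq_of]⟩
  | add x y hx hy =>
    obtain ⟨n, a, ha⟩ := hx
    obtain ⟨m, b, hb⟩ := hy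
    obtain ⟨a', ha'⟩ := tel_raise t n (max n m) (le_max_left _ _) a
    obtain ⟨b', hb'⟩ := tel_raise t m (max n m) (le_max_right _ _) b
    refine ⟨max n m, a' + b', ?_⟩
    have := add_mem (add_mem ha ha') (add_mem hb hb')
    rw [map_add]
    convert this using 1
    abel

lemma tel_dies (n : ℕ) (x : M n) (h : DMDies t n x) :
    DirectSum.lof S ℕ M n x ∈ LinearMap.range (telMap t) := by
  induction h with
  | zero n => simp
  | step n x _ ih =>
    have : DirectSum.lof S ℕ M n x - DirectSum.lof S ℕ M (n+1) (t n x) ∈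
      LinearMap.range (telMap t) := ⟨DirectSum.lof S ℕ M n x, by simp [telMap, telShift_lof]⟩
    simpa using add_mem this ih

lemma DMDies.of_range (w : ⨁ n, M n) (n : ℕ) (x : M n) (h : telMap t w = DirectSum.lof S ℕ M n x) :
    DMDies t n x := by
  have h1 : ∀ k, w k - telShift t w k = (DirectSum.lof S ℕ M n x) k := by
    intro k; rw [← h]; simp [telMap]
  have h2 : ∀ k, k < n → w k = 0 := by
    intro k
    induction k with
    | zero =>
      intro hk
      have := h1 0
      rwa [telShift_zero, sub_zero, DirectSum.lof_eq_of, DirectSum.of_eq_of_ne _ _ _ hk.ne] at this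
    | succ k ih =>
      intro hk
      have := h1 (k+1)
      rwa [telShift_succ, ih (by omega), map_zero, sub_zero, DirectSum.lof_eq_of,
        DirectSum.of_eq_of_ne _ _ _ hk.ne] at this
  have h3 : w n = x := by
    have := h1 n
    rw [DirectSum.lof_eq_of, DirectSum.of_eq_same] at this
    rw [← this]
    cases n with
    | zero => rw [telShift_zero, sub_zero]
    | succ n => rw [telShift_succ, h2 n (by omega), map_zero, sub_zero]
  have h4 : ∀ k, n ≤ k → w (k+1) = t k (w k) := by
    intro k hk
    have := h1 (k+1)
    rwa [telShift_succ, DirectSum.lof_eq_of, DirectSum.of_eq_of_ne _ _ _ (by omega),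
      sub_eq_zero] at this
  obtain ⟨N, hN⟩ : ∃ N, ∀ k, N ≤ k → w k = 0 := by
    classical
    refine ⟨(DFinsupp.support w).sup id + 1, fun k hk => ?_⟩
    by_contra hne
    have : k ∈ DFinsupp.support w := by simpa using hne
    have := Finset.le_sup (f := id) this
    simp at this
    omega
  rw [← h3]
  have : ∀ j k, n ≤ k → N ≤ k + j → DMDies t k (w k) := by
    intro j
    induction j with
    | zero => intro k _ hk; rw [hN k (by omega)]; exact .zero k
    | succ j ih => intro k hk hk2; exact .step _ _ (by rw [← h4 k hk]; exact ih _ (by omega) (by omega))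
  exact this N n le_rfl (by omega)

lemma DMClass.telescope {P : DMPred S} (hP : DMClass P) (d : ∀ i, M i →ₗ[S] M i)
    (ht : ∀ n x, t n (d n x) = d (n+1) (t n x))
    {N : Type u} [AddCommGroup N] [Module S N] (dN : N →ₗ[S] N) (j : ∀ n, M n →ₗ[S] N)
    (hj : ∀ n x, j n (d n x) = dN (j n x)) (hjt : ∀ n x, j (n+1) (t n x) = j n x)
    (hs : ∀ y, ∃ n x, j n x = y) (hi : ∀ n x, j n x = 0 → DMDies t n x)
    (h : ∀ n, P (M n) (d n)) : P N dN := by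
  have h1 := hP.dsum_nat M d h
  refine hP.ses₃ _ _ N _ _ dN ⟨hP.sq _ _ h1, telMap t, DirectSum.toModule S _ _ j,
    ?_, ?_, telMap_inj t, ?_, ?_⟩ h1 h1
  · intro x
    have : telMap t ∘ₗ DirectSum.lmap d = DirectSum.lmap d ∘ₗ telMap t := by
      ext n x : 2
      simp [telMap, telShift_lof, DirectSum.lmap_lof, ht]
    exact LinearMap.congr_fun this x
  · intro x
    have : DirectSum.toModule S _ _ j ∘ₗ DirectSum.lmap d = dN ∘ₗ DirectSum.toModule S _ _ j := by
      ext n x : 2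
      simp [DirectSum.lmap_lof, hj]
    exact LinearMap.congr_fun this x
  · intro y
    obtain ⟨n, x, rfl⟩ := hs y
    exact ⟨DirectSum.lof S ℕ M n x, by simp⟩
  · have key : ∀ w, DirectSum.toModule S _ _ j (telMap t w) = 0 := by
      intro w
      change (DirectSum.toModule S _ _ j ∘ₗ telMap t) w = (0 : _ →ₗ[S] N) w
      congr 1
      ext n x : 2
      simp [telMap, telShift_lof, hjt]
    intro x
    constructor
    · intro hx
      obtain ⟨n, y, w, hw⟩ := tel_single t x
      have h2 := key w
      rw [hw, map_sub, hx, DirectSum.toModule_lof, zero_sub, neg_eq_zero] at h2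
      obtain ⟨v, hv⟩ := tel_dies t n y (hi n y h2)
      exact ⟨w + v, by rw [map_add, hw, hv]; abel⟩
    · rintro ⟨w, rfl⟩; exact key w

lemma DMClass.retract {P : DMPred S} (hP : DMClass P) {M N : Type u} [AddCommGroup M] [Module S M]
    [AddCommGroup N] [Module S N] {d : M →ₗ[S] M} {d' : N →ₗ[S] N} (s : N →ₗ[S] M) (r : M →ₗ[S] N)
    (hs : ∀ x, s (d' x) = d (s x)) (hr : ∀ x, r (d x) = d' (r x)) (hrs : ∀ x, r (s x) = x)
    (h : P M d) : P N d' := by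
  refine hP.telescope (M := fun _ => M) (fun _ => s ∘ₗ r) (fun _ => d) ?_ d' (fun _ => r) ?_ ?_ ?_ ?_
    (fun _ => h)
  · intro n x; simp [hr, hs]
  · intro n x; exact hr x
  · intro n x; simp [hrs]
  · intro y; exact ⟨0, s y, hrs y⟩
  · intro n x hx; refine DMDies.step (M := fun _ => M) n x ?_
    simp only [LinearMap.comp_apply, hx, map_zero]; exact DMDies.zero (M := fun _ => M) _

end telescope

end PartA1

section PartA2
open DirectSum

section restr
variable {S S' : Type u} [CommRing S] [CommRing S']

def DMrestrMap (f : S →+* S') {M N : Type u} [AddCommGroup M] [AddCommGroup N]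
    [Module S M] [Module S N] [Module S' M] [Module S' N]
    (hM : ∀ (s : S) (x : M), s • x = f s • x) (hN : ∀ (s : S) (x : N), s • x = f s • x)
    (d : M →ₗ[S'] N) : M →ₗ[S] N where
  toFun := d
  map_add' := d.map_add
  map_smul' s x := by rw [hM, d.map_smul, RingHom.id_apply, hN]

def DMrestr (f : S →+* S') (P : DMPred S) : DMPred S' := fun M _ _ d =>
  letI : Module S M := Module.compHom M f
  P M (DMrestrMap f (fun _ _ => rfl) (fun _ _ => rfl) d)

lemma DMrestr_iff (f : S →+* S') (P : DMPred S) (M : Type u) [AddCommGroup M]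
    [i1 : Module S M] [Module S' M] (hM : ∀ (s : S) (x : M), s • x = f s • x)
    (d : M →ₗ[S] M) (d' : M →ₗ[S'] M) (h : ∀ x, d x = d' x) : DMrestr f P M d' ↔ P M d := by
  have : i1 = Module.compHom M f := by
    apply Module.ext
    ext s x
    exact hM s x
  subst this
  letI : Module S M := Module.compHom M f
  have : d = DMrestrMap f (fun _ _ => rfl) (fun _ _ => rfl) d' := by
    ext x; exact h x
  rw [this]
  rfl

lemma DMrestr_ses (f : S →+* S') (M₁ M₂ M₃ : Type u) [AddCommGroup M₁] [AddCommGroup M₂]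
    [AddCommGroup M₃] [Module S' M₁] [Module S' M₂] [Module S' M₃]
    (d₁ : M₁ →ₗ[S'] M₁) (d₂ : M₂ →ₗ[S'] M₂) (d₃ : M₃ →ₗ[S'] M₃) (h : DMIsSES d₁ d₂ d₃) :
    letI : Module S M₁ := Module.compHom M₁ f
    letI : Module S M₂ := Module.compHom M₂ f
    letI : Module S M₃ := Module.compHom M₃ f
    DMIsSES (DMrestrMap f (fun (_ : S) _ => rfl) (fun _ _ => rfl) d₁)
     (DMrestrMap f (fun (_ : S) _ => rfl) (fun _ _ => rfl) d₂)
     (DMrestrMap f (fun (_ : S) _ => rfl) (fun _ _ => rfl) d₃) := by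
  letI : Module S M₁ := Module.compHom M₁ f
  letI : Module S M₂ := Module.compHom M₂ f
  letI : Module S M₃ := Module.compHom M₃ f
  obtain ⟨h1, i, p, h2, h3, h4, h5, h6⟩ := h
  exact ⟨h1, DMrestrMap f (fun (_ : S) _ => rfl) (fun _ _ => rfl) i,
    DMrestrMap f (fun (_ : S) _ => rfl) (fun _ _ => rfl) p, h2, h3, h4, h5, h6⟩

lemma DMClass.restr (f : S →+* S') {P : DMPred S} (hP : DMClass P) : DMClass (DMrestr f P) where
  sq M _ _ d h := by
    letI : Module S M := Module.compHom M f
    exact hP.sq M _ h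
  acyclic M _ _ d h1 h2 := by
    letI : Module S M := Module.compHom M f
    exact hP.acyclic M _ h1 h2
  ses₁ M₁ M₂ M₃ _ _ _ _ _ _ d₁ d₂ d₃ h h2 h3 := by
    letI : Module S M₁ := Module.compHom M₁ f
    letI : Module S M₂ := Module.compHom M₂ f
    letI : Module S M₃ := Module.compHom M₃ f
    exact hP.ses₁ M₁ M₂ M₃ _ _ _ (DMrestr_ses f M₁ M₂ M₃ d₁ d₂ d₃ h) h2 h3
  ses₂ M₁ M₂ M₃ _ _ _ _ _ _ d₁ d₂ d₃ h h2 h3 := by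
    letI : Module S M₁ := Module.compHom M₁ f
    letI : Module S M₂ := Module.compHom M₂ f
    letI : Module S M₃ := Module.compHom M₃ f
    exact hP.ses₂ M₁ M₂ M₃ _ _ _ (DMrestr_ses f M₁ M₂ M₃ d₁ d₂ d₃ h) h2 h3
  ses₃ M₁ M₂ M₃ _ _ _ _ _ _ d₁ d₂ d₃ h h2 h3 := by
    letI : Module S M₁ := Module.compHom M₁ f
    letI : Module S M₂ := Module.compHom M₂ f
    letI : Module S M₃ := Module.compHom M₃ f
    exact hP.ses₃ M₁ M₂ M₃ _ _ _ (DMrestr_ses f M₁ M₂ M₃ d₁ d₂ d₃ h) h2 h3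
  dsum ι M _ _ d h := by
    letI : ∀ i, Module S (M i) := fun i => Module.compHom (M i) f
    have := hP.dsum ι M (fun i => DMrestrMap f (fun (_ : S) _ => rfl) (fun _ _ => rfl) (d i)) h
    rw [DMrestr_iff (d := DirectSum.lmap
      (fun i => DMrestrMap f (fun (_ : S) _ => rfl) (fun _ _ => rfl) (d i)))]
    · exact this
    · intro s x; rfl
    · intro x; rfl

end restr

section cells
variable {S : Type u} [CommRing S]

structure CellD {M : Type u} [AddCommGroup M] [Module S M] (d : M →ₗ[S] M) where
  E : Type u
  [ag : AddCommGroup E]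
  [md : Module S E]
  dE : E →ₗ[S] E
  φ : E →ₗ[S] M
  sq : ∀ e, dE (dE e) = 0
  comm : ∀ e, d (φ e) + φ (dE e) = 0

attribute [instance] CellD.ag CellD.md

variable {M : Type u} [AddCommGroup M] [Module S M] {d : M →ₗ[S] M}

def CellD.Z (c : CellD d) : Type u := {p : M × c.E // d p.1 + c.φ p.2 = 0 ∧ c.dE p.2 = 0}

noncomputable def CellD.next (c : CellD d) : CellD d where
  E := c.E × (c.Z →₀ S)
  dE := LinearMap.inl S _ _ ∘ₗ LinearMap.coprod c.dE
    (Finsupp.linearCombination S (fun z : c.Z => z.1.2))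
  φ := LinearMap.coprod c.φ (Finsupp.linearCombination S (fun z : c.Z => z.1.1))
  sq := by
    rintro ⟨e, z⟩
    have : c.dE ∘ₗ (Finsupp.linearCombination S (fun z : c.Z => z.1.2)) = 0 := by
      ext z
      simp [z.2.2]
    have := LinearMap.congr_fun this z
    simp at this
    simp [c.sq, this]
  comm := by
    rintro ⟨e, z⟩
    have : d ∘ₗ (Finsupp.linearCombination S (fun z : c.Z => z.1.1)) +
      c.φ ∘ₗ (Finsupp.linearCombination S (fun z : c.Z => z.1.2)) = 0 := by
      ext z
      simp [z.2.1]
    have h1 := LinearMap.congr_fun this z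
    have h2 := c.comm e
    simp at h1
    simp
    rw [add_add_add_comm, h1, h2, add_zero]


noncomputable def CellD.inl (c : CellD d) : c.E →ₗ[S] c.next.E :=
  LinearMap.inl S c.E (c.Z →₀ S)

lemma CellD.inl_d (c : CellD d) (x) : c.inl (c.dE x) = c.next.dE (c.inl x) := by
  change (LinearMap.inl S c.E (c.Z →₀ S)) _ = LinearMap.inl S _ _ (LinearMap.coprod c.dE
    (Finsupp.linearCombination S (fun z : c.Z => z.1.2)) (x, (0 : c.Z →₀ S)))
  simp

lemma CellD.inl_φ (c : CellD d) (x) : c.next.φ (c.inl x) = c.φ x := by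
  change LinearMap.coprod c.φ (Finsupp.linearCombination S (fun z : c.Z => z.1.1))
    (x, (0 : c.Z →₀ S)) = _
  simp

lemma CellD.kill (c : CellD d) (σ : M) (x : c.E) (h1 : d σ + c.φ x = 0) (h2 : c.dE x = 0) :
    ∃ w : c.next.E, c.next.φ w = σ ∧ c.next.dE w = c.inl x := by
  let z : c.Z := ⟨(σ, x), h1, h2⟩
  refine ⟨((0, Finsupp.single z 1) : c.E × (c.Z →₀ S)), ?_, ?_⟩
  · change LinearMap.coprod c.φ (Finsupp.linearCombination S (fun z : c.Z => z.1.1))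
      ((0, Finsupp.single z 1) : c.E × (c.Z →₀ S)) = _
    simp only [LinearMap.coprod_apply, map_zero, zero_add]
    rw [Finsupp.linearCombination_single, one_smul]
  · change LinearMap.inl S _ _ (LinearMap.coprod c.dE
      (Finsupp.linearCombination S (fun z : c.Z => z.1.2))
      ((0, Finsupp.single z 1) : c.E × (c.Z →₀ S))) = LinearMap.inl S c.E (c.Z →₀ S) x
    simp only [LinearMap.coprod_apply, map_zero, zero_add]
    rw [Finsupp.linearCombination_single, one_smul]

variable (d) in
noncomputable def cellSeq : ℕ → CellD d
  | 0 => ⟨PUnit, 0, 0, fun _ => rfl, fun _ => by simp⟩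
  | n+1 => (cellSeq n).next

lemma DMClass.free {P : DMPred S} (hP : DMClass P) (h : P S 0) (κ : Type u) : P (κ →₀ S) 0 := by
  classical
  have := hP.dsum κ (fun _ => S) (fun _ => 0) (fun _ => h)
  refine hP.of_equiv (finsuppLEquivDirectSum S S κ).symm ?_ this
  intro x
  have h0 : DirectSum.lmap (fun _ : κ => (0 : S →ₗ[S] S)) = 0 := by
    ext i x : 2
    simp [DirectSum.lmap_lof]
  simp [h0]

lemma DMClass.cell_next {P : DMPred S} (hP : DMClass P) (h : P S 0) (c : CellD d)
    (hc : P c.E c.dE) : P c.next.E c.next.dE := by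
  refine hP.ses₂ _ c.next.E _ c.dE _ 0 ⟨c.next.sq,
    c.inl, LinearMap.snd S c.E (c.Z →₀ S), c.inl_d, ?_, ?_, ?_, ?_⟩ hc (hP.free h c.Z)
  · rintro ⟨x, z⟩
    rfl
  · exact LinearMap.inl_injective
  · exact LinearMap.snd_surjective
  · rintro ⟨x, z⟩
    constructor
    · rintro (rfl : z = 0); exact ⟨x, rfl⟩
    · rintro ⟨y, hy⟩; rw [← hy]; rfl

lemma DMClass.cells {P : DMPred S} (hP : DMClass P) (h : P S 0) (n : ℕ) :
    P (cellSeq d n).E (cellSeq d n).dE := by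
  induction n with
  | zero =>
    haveI : Subsingleton (cellSeq d 0).E := inferInstanceAs (Subsingleton PUnit)
    exact hP.of_subsingleton _ _
  | succ n ih => exact hP.cell_next h _ ih

theorem DMClass.all_of_self_aux {P : DMPred S} (hP : DMClass P) (hd : ∀ x, d (d x) = 0)
    (E : ℕ → Type u) [∀ n, AddCommGroup (E n)] [∀ n, Module S (E n)] (dE : ∀ n, E n →ₗ[S] E n)
    (φE : ∀ n, E n →ₗ[S] M) (hE : ∀ n, P (E n) (dE n)) (hφE : ∀ n x, d (φE n x) + φE n (dE n x) = 0)
    (t : ∀ n, E n →ₗ[S] E (n+1)) (htd : ∀ n x, t n (dE n x) = dE (n+1) (t n x))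
    (htφ : ∀ n x, φE (n+1) (t n x) = φE n x)
    (hk : ∀ n (σ : M) (x : E n), d σ + φE n x = 0 → dE n x = 0 →
      ∃ w : E (n+1), φE (n+1) w = σ ∧ dE (n+1) w = t n x) : P M d := by
  let W := LinearMap.range (telMap t)
  let N := (⨁ n, E n) ⧸ W
  have hcomm : ∀ x, telMap t (DirectSum.lmap dE x) =
      DirectSum.lmap dE (telMap t x) := by
    intro x
    have : telMap t ∘ₗ DirectSum.lmap dE =
      DirectSum.lmap dE ∘ₗ telMap t := by
      ext n x : 2
      simp [telMap, telShift_lof, DirectSum.lmap_lof, htd]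
    exact LinearMap.congr_fun this x
  let dN : N →ₗ[S] N := W.mapQ W (DirectSum.lmap dE) (by
    rintro _ ⟨x, rfl⟩
    exact ⟨_, hcomm x⟩)
  let φ0 : (⨁ n, E n) →ₗ[S] M := DirectSum.toModule S _ _ φE
  have hφ0 : φ0 ∘ₗ telMap t = 0 := by
    ext n x : 2
    simp [φ0, telMap, telShift_lof, htφ]
  let φ : N →ₗ[S] M := W.liftQ φ0 (by
    rintro _ ⟨x, rfl⟩
    exact LinearMap.congr_fun hφ0 x)
  let j : ∀ n, E n →ₗ[S] N := fun n => W.mkQ ∘ₗ DirectSum.lof S ℕ E n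
  have hjd : ∀ n x, j n (dE n x) = dN (j n x) := by
    intro n x
    change W.mkQ _ = W.mkQ (DirectSum.lmap dE (DirectSum.lof S ℕ E n x))
    rw [DirectSum.lmap_lof]
  have hjφ : ∀ n x, φ (j n x) = φE n x := by
    intro n x
    change φ0 (DirectSum.lof S ℕ E n x) = _
    simp [φ0]
  have hjt : ∀ n x, j (n+1) (t n x) = j n x := by
    intro n x
    symm
    refine (Submodule.Quotient.eq W).2 ⟨DirectSum.lof S ℕ E n x, by simp [telMap, telShift_lof]⟩
  have hs : ∀ y, ∃ n x, j n x = y := by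
    intro y
    obtain ⟨y, rfl⟩ := W.mkQ_surjective y
    obtain ⟨n, x, hx⟩ := tel_single (M := E) t y
    exact ⟨n, x, ((Submodule.Quotient.eq W).2 hx).symm⟩
  have hi : ∀ n x, j n x = 0 → DMDies (M := E) t n x := by
    intro n x hx
    obtain ⟨w, hw⟩ := (Submodule.Quotient.mk_eq_zero W).1 hx
    exact DMDies.of_range t w n x hw
  have hN : P N dN := hP.telescope (M := E) t dE htd
    dN j hjd hjt hs hi hE
  have hNsq := hP.sq _ _ hN
  have hNc : ∀ x, d (φ x) + φ (dN x) = 0 := by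
    intro x
    obtain ⟨n, x, rfl⟩ := hs x
    rw [← hjd, hjφ, hjφ]
    exact hφE n x
  have hcyc : ∀ n y, DMDies (M := E) t n y → ∀ x, dE n x = y →
      ∃ m x', j m x' = j n x ∧ dE m x' = 0 := by
    intro n y hy
    induction hy with
    | zero n => intro x hx; exact ⟨n, x, rfl, hx⟩
    | step n y _ ih =>
      intro x hx
      obtain ⟨m, x', h1, h2⟩ := ih (t n x) (by rw [← hx]; exact (htd n x).symm)
      exact ⟨m, x', by rw [h1, hjt], h2⟩
  let dC : (M × N) →ₗ[S] (M × N) := LinearMap.prod (LinearMap.coprod d φ) (dN ∘ₗ LinearMap.snd S _ _)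
  have hdC : ∀ x, dC (dC x) = 0 := by
    rintro ⟨x, y⟩
    have := hNc y
    simp [dC, hd, hNsq, this]
  have hC : P (M × N) dC := by
    refine hP.acyclic _ _ hdC ?_
    rintro ⟨σ, e⟩ hx
    have hx : d σ + φ e = 0 ∧ dN e = 0 := by
      have h1 := congrArg Prod.fst hx
      have h2 := congrArg Prod.snd hx
      exact ⟨by simpa [dC] using h1, by simpa [dC] using h2⟩
    obtain ⟨n, x, rfl⟩ := hs e
    obtain ⟨m, x', h1, h2⟩ := hcyc n _ (hi n _ ((hjd n x).trans hx.2)) x rfl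
    rw [← h1, hjφ] at hx
    obtain ⟨w, hw1, hw2⟩ := hk m σ x' hx.1 h2
    refine ⟨(0, j (m+1) w), ?_⟩
    change (d 0 + φ (j (m+1) w), dN (j (m+1) w)) = _
    rw [hjφ, ← hjd, hw1, hw2, map_zero, zero_add]
    rw [← h1, hjt]
  refine hP.ses₁ M (M × N) N d dC dN ⟨hdC, LinearMap.inl S _ _, LinearMap.snd S _ _, ?_, ?_,
    LinearMap.inl_injective, LinearMap.snd_surjective, ?_⟩ hC hN
  · intro x; simp [dC]
  · intro x; simp [dC]
  · rintro ⟨x, z⟩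
    constructor
    · rintro (rfl : z = 0); exact ⟨x, rfl⟩
    · rintro ⟨y, hy⟩; rw [← hy]; rfl

theorem DMClass.all_of_self {P : DMPred S} (hP : DMClass P) (h : P S 0)
    (hd : ∀ x, d (d x) = 0) : P M d :=
  hP.all_of_self_aux hd (fun n => (cellSeq d n).E) (fun n => (cellSeq d n).dE)
    (fun n => (cellSeq d n).φ) (fun n => hP.cells h n) (fun n => (cellSeq d n).comm)
    (fun n => (cellSeq d n).inl) (fun n => (cellSeq d n).inl_d)
    (fun n => (cellSeq d n).inl_φ) (fun n => (cellSeq d n).kill)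

end cells

end PartA2

section PartA3
open DirectSum

section mat
variable {S : Type u} [CommRing S]
variable {ι κ τ : Type} [Fintype ι] [Fintype κ] [Fintype τ]

def matAct (A : Matrix ι κ S) (M : Type u) [AddCommGroup M] [Module S M] : (κ → M) →ₗ[S] (ι → M) where
  toFun x a := ∑ b, A a b • x b
  map_add' x y := by ext a; simp [Finset.sum_add_distrib]
  map_smul' c x := by ext a; simp [Finset.smul_sum, smul_comm c]

variable {M : Type u} [AddCommGroup M] [Module S M]

lemma matAct_apply (A : Matrix ι κ S) (x : κ → M) (a : ι) : matAct A M x a = ∑ b, A a b • x b := rfl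

lemma matAct_mul (A : Matrix ι κ S) (B : Matrix κ τ S) (x : τ → M) :
    matAct (A * B) M x = matAct A M (matAct B M x) := by
  ext a
  simp only [matAct_apply, Matrix.mul_apply, Finset.sum_smul, Finset.smul_sum, mul_smul]
  rw [Finset.sum_comm]

lemma matAct_one [DecidableEq ι] (x : ι → M) : matAct (1 : Matrix ι ι S) M x = x := by
  ext a
  simp [matAct_apply, Matrix.one_apply]

lemma matAct_zero (x : κ → M) : matAct (0 : Matrix ι κ S) M x = 0 := by
  ext a
  simp [matAct_apply]

lemma matAct_add (A B : Matrix ι κ S) (x : κ → M) : matAct (A + B) M x = matAct A M x + matAct B M x := by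
  ext a
  simp [matAct_apply, add_smul, Finset.sum_add_distrib]

lemma matAct_smul (c : S) (A : Matrix ι κ S) (x : κ → M) : matAct (c • A) M x = c • matAct A M x := by
  ext a
  simp [matAct_apply, Finset.smul_sum, mul_smul]

def twMap (D : Matrix ι ι S) (s : ι → S) (d : M →ₗ[S] M) : (ι → M) →ₗ[S] (ι → M) :=
  matAct D M + LinearMap.pi (fun a => s a • (d ∘ₗ LinearMap.proj a))

lemma twMap_apply (D : Matrix ι ι S) (s : ι → S) (d : M →ₗ[S] M) (x : ι → M) (a : ι) :
    twMap D s d x a = ∑ b, D a b • x b + s a • d (x a) := rfl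

lemma twMap_sq (D : Matrix ι ι S) (hD : D * D = 0) (s : ι → S) (hs : ∀ a, s a * s a = 1)
    (hDs : ∀ a b, D a b * s b + s a * D a b = 0) (d : M →ₗ[S] M) (hd : ∀ x, d (d x) = 0) (x : ι → M) :
    twMap D s d (twMap D s d x) = 0 := by
  have h1 : matAct D M (matAct D M x) = 0 := by rw [← matAct_mul, hD, matAct_zero]
  ext a
  have h2 := congrFun h1 a
  rw [matAct_apply] at h2
  simp only [matAct_apply] at h2
  simp only [twMap_apply, smul_add, Finset.sum_add_distrib, h2, map_add, map_sum, map_smul, hd,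
    smul_zero, add_zero, Pi.zero_apply, zero_add]
  rw [Finset.smul_sum, ← Finset.sum_add_distrib]
  refine Finset.sum_eq_zero fun b _ => ?_
  rw [← mul_smul, ← mul_smul, ← add_smul, hDs, zero_smul]

def twP (D : Matrix ι ι S) (s : ι → S) (P : DMPred S) : DMPred S := fun M _ _ d =>
  (∀ x, d (d x) = 0) ∧ P (ι → M) (twMap D s d)

lemma twMap_natural (D : Matrix ι ι S) (s : ι → S) {N : Type u} [AddCommGroup N] [Module S N]
    (d : M →ₗ[S] M) (d' : N →ₗ[S] N) (f : M →ₗ[S] N) (hf : ∀ x, f (d x) = d' (f x)) (x : ι → M) :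
    f.compLeft ι (twMap D s d x) = twMap D s d' (f.compLeft ι x) := by
  ext a
  simp [twMap_apply, hf]

lemma twMap_acyclic (D : Matrix ι ι S) (s : ι → S) (hs : ∀ a, s a * s a = 1)
    (deg : ι → ℤ) (hdeg : ∀ a b, D a b ≠ 0 → deg a = deg b + 1)
    (d : M →ₗ[S] M) (hd : ∀ x, d x = 0 → ∃ y, d y = x)
    (hsq : ∀ x, twMap D s d (twMap D s d x) = 0) (x : ι → M) (hx : twMap D s d x = 0) :
    ∃ y, twMap D s d y = x := by
  obtain ⟨N, hN⟩ : ∃ N : ℤ, ∀ a, deg a < N := by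
    obtain ⟨N, hN⟩ := (Set.finite_range deg).bddAbove
    exact ⟨N + 1, fun a => by have := hN ⟨a, rfl⟩; omega⟩
  obtain ⟨K, hK⟩ : ∃ K : ℕ, ∀ a, N - K ≤ deg a := by
    obtain ⟨K, hK⟩ := (Set.finite_range deg).bddBelow
    exact ⟨(N - K).toNat, fun a => by have := hK ⟨a, rfl⟩; omega⟩
  have claim : ∀ k : ℕ, ∀ x, twMap D s d x = 0 → (∀ a, deg a < N - k → x a = 0) →
      ∃ y, twMap D s d y = x := by
    intro k
    induction k with
    | zero =>
      intro x _ h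
      refine ⟨0, ?_⟩
      rw [map_zero]; ext a
      exact (h a (by simpa using hN a)).symm
    | succ k ih =>
      intro x hx h
      have key : ∀ x : ι → M, (∀ a, deg a < N - (k+1 : ℕ) → x a = 0) →
          ∀ a, deg a ≤ N - (k+1 : ℕ) → ∑ b, D a b • x b = 0 := by
        intro x h a ha
        refine Finset.sum_eq_zero fun b _ => ?_
        by_cases hb : D a b = 0
        · rw [hb, zero_smul]
        · rw [h b (by have := hdeg a b hb; omega), smul_zero]
      have h2 : ∀ a, deg a ≤ N - (k+1 : ℕ) → ∃ y, d y = x a := by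
        intro a ha
        apply hd
        have h3 := congrFun hx a
        rw [twMap_apply, key x h a ha, zero_add] at h3
        have := congrArg (fun z => s a • z) h3
        simpa [← mul_smul, hs] using this
      choose! y hy using h2
      let y' : ι → M := fun a => if deg a = N - (k+1 : ℕ) then s a • y a else 0
      obtain ⟨z, hz⟩ := ih (x - twMap D s d y') (by rw [map_sub, hx, hsq, sub_zero]) (by
        intro a ha
        have hale : deg a ≤ N - (k+1 : ℕ) := by push_cast; omega
        rw [Pi.sub_apply, twMap_apply, key y' (fun a ha => if_neg ha.ne) a hale, zero_add]
        by_cases h5 : deg a = N - (k+1 : ℕ)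
        · simp only [y', if_pos h5, map_smul, ← mul_smul, hs, one_smul]
          rw [hy a h5.le, sub_self]
        · simp only [y', if_neg h5, map_zero, smul_zero, sub_zero]
          exact h a (lt_of_le_of_ne hale h5))
      exact ⟨z + y', by rw [map_add, hz]; abel⟩
  exact claim K x hx (fun a ha => absurd (hK a) (not_le.2 ha))

lemma tw_ses {D : Matrix ι ι S} {s : ι → S} {M₁ M₂ M₃ : Type u} [AddCommGroup M₁] [AddCommGroup M₂]
    [AddCommGroup M₃] [Module S M₁] [Module S M₂] [Module S M₃]
    (hD : D * D = 0) (hs : ∀ a, s a * s a = 1)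
    (hDs : ∀ a b, D a b * s b + s a * D a b = 0)
    (d₁ : M₁ →ₗ[S] M₁) (d₂ : M₂ →ₗ[S] M₂) (d₃ : M₃ →ₗ[S] M₃) (h : DMIsSES d₁ d₂ d₃) :
    DMIsSES (twMap D s d₁) (twMap D s d₂) (twMap D s d₃) := by
  obtain ⟨h1, f, g, h2, h3, h4, h5, h6⟩ := h
  refine ⟨twMap_sq D hD s hs hDs _ h1, f.compLeft ι, g.compLeft ι, twMap_natural D s _ _ f h2,
    twMap_natural D s _ _ g h3, ?_, ?_, ?_⟩
  · intro x y hxy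
    ext a; exact h4 (congrFun hxy a)
  · intro y
    choose x hx using fun a => h5 (y a)
    exact ⟨x, funext hx⟩
  · intro x
    constructor
    · intro hx
      choose y hy using fun a => (h6 (x a)).1 (congrFun hx a)
      exact ⟨y, funext hy⟩
    · rintro ⟨y, rfl⟩
      ext a; exact (h6 _).2 ⟨y a, rfl⟩

lemma DMses_sq {M₁ M₂ M₃ : Type u} [AddCommGroup M₁] [AddCommGroup M₂]
    [AddCommGroup M₃] [Module S M₁] [Module S M₂] [Module S M₃]
    {d₁ : M₁ →ₗ[S] M₁} {d₂ : M₂ →ₗ[S] M₂} {d₃ : M₃ →ₗ[S] M₃} (h : DMIsSES d₁ d₂ d₃) :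
    (∀ x, d₁ (d₁ x) = 0) ∧ (∀ x, d₃ (d₃ x) = 0) := by
  obtain ⟨h1, f, g, h2, h3, h4, h5, h6⟩ := h
  constructor
  · intro x
    apply h4
    rw [h2, h2, h1, map_zero]
  · intro x
    obtain ⟨x, rfl⟩ := h5 x
    rw [← h3, ← h3, h1, map_zero]

noncomputable def piDsum (ι : Type) [Fintype ι] {κ : Type u} (M : κ → Type u) [∀ i, AddCommGroup (M i)]
    [∀ i, Module S (M i)] : (⨁ k, (ι → M k)) ≃ₗ[S] (ι → ⨁ k, M k) := by
  classical
  refine LinearEquiv.ofLinearMap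
    (DirectSum.toModule S _ _ (fun k => LinearMap.pi (fun a => DirectSum.lof S κ M k ∘ₗ LinearMap.proj a)))
    (∑ a, DirectSum.lmap (fun k => LinearMap.single S (fun _ => M k) a) ∘ₗ LinearMap.proj a) ?_ ?_
  · refine LinearMap.pi_ext' fun a => ?_
    ext k x b : 3
    simp only [LinearMap.comp_apply, LinearMap.sum_apply, LinearMap.proj_apply, LinearMap.id_apply]
    rw [Finset.sum_eq_single a]
    · simp [DirectSum.lmap_lof, Pi.single_apply]
      split_ifs <;> simp
    · intro c _ hc
      simp [Pi.single_eq_of_ne hc]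
    · simp
  · refine DirectSum.linearMap_ext S fun k => LinearMap.ext fun x => ?_
    simp only [LinearMap.comp_apply, LinearMap.sum_apply, LinearMap.proj_apply, LinearMap.id_apply,
      DirectSum.toModule_lof, LinearMap.pi_apply, DirectSum.lmap_lof]
    rw [← map_sum]
    congr 1
    ext b
    simp [Finset.sum_apply, Pi.single_apply]

lemma piDsum_lof (ι : Type) [Fintype ι] {κ : Type u} [DecidableEq κ] (M : κ → Type u) [∀ i, AddCommGroup (M i)]
    [∀ i, Module S (M i)] (k : κ) (x : ι → M k) (a : ι) :
    piDsum (S := S) ι M (DirectSum.lof S κ (fun k => (ι → M k)) k x) a = DirectSum.lof S κ M k (x a) := by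
  have : (fun a b => Classical.propDecidable (a = b)) = ‹DecidableEq κ› := Subsingleton.elim _ _
  subst this
  simp [piDsum]

lemma DMClass.tw {P : DMPred S} (hP : DMClass P) (D : Matrix ι ι S) (hD : D * D = 0) (s : ι → S)
    (hs : ∀ a, s a * s a = 1) (hDs : ∀ a b, D a b * s b + s a * D a b = 0)
    (deg : ι → ℤ) (hdeg : ∀ a b, D a b ≠ 0 → deg a = deg b + 1) : DMClass (twP D s P) where
  sq M _ _ d h := h.1
  acyclic M _ _ d h1 h2 := ⟨h1, hP.acyclic _ _ (twMap_sq D hD s hs hDs d h1)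
    (twMap_acyclic D s hs deg hdeg d h2 (twMap_sq D hD s hs hDs d h1))⟩
  ses₁ M₁ M₂ M₃ _ _ _ _ _ _ d₁ d₂ d₃ h h2 h3 :=
    ⟨(DMses_sq h).1, hP.ses₁ _ _ _ _ _ _ (tw_ses hD hs hDs d₁ d₂ d₃ h) h2.2 h3.2⟩
  ses₂ M₁ M₂ M₃ _ _ _ _ _ _ d₁ d₂ d₃ h h2 h3 :=
    ⟨h.1, hP.ses₂ _ _ _ _ _ _ (tw_ses hD hs hDs d₁ d₂ d₃ h) h2.2 h3.2⟩
  ses₃ M₁ M₂ M₃ _ _ _ _ _ _ d₁ d₂ d₃ h h2 h3 :=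
    ⟨(DMses_sq h).2, hP.ses₃ _ _ _ _ _ _ (tw_ses hD hs hDs d₁ d₂ d₃ h) h2.2 h3.2⟩
  dsum κ M _ _ d h := by
    classical
    refine ⟨fun x => ?_, ?_⟩
    · have : DirectSum.lmap d ∘ₗ DirectSum.lmap d = 0 := by
        ext k x : 2
        simp [DirectSum.lmap_lof, (h k).1]
      exact LinearMap.congr_fun this x
    · have h1 := hP.dsum κ (fun k => ι → M k) (fun k => twMap D s (d k)) (fun k => (h k).2)
      refine hP.of_equiv (piDsum ι M) (fun x => ?_) h1
      have : (piDsum (S := S) ι M).toLinearMap ∘ₗ DirectSum.lmap (fun k => twMap D s (d k)) =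
        twMap D s (DirectSum.lmap d) ∘ₗ (piDsum (S := S) ι M).toLinearMap := by
        refine DirectSum.linearMap_ext S fun k => LinearMap.ext fun x => funext fun a => ?_
        simp only [LinearMap.comp_apply, DirectSum.lmap_lof, LinearEquiv.coe_coe]
        simp only [twMap_apply, piDsum_lof, DirectSum.lmap_lof]
        simp
      exact LinearMap.congr_fun this x

/-- grading data -/
def GradedMat (D : Matrix ι ι S) : Prop :=
  ∃ deg : ι → ℤ, ∀ a b, D a b ≠ 0 → deg a = deg b + 1

lemma DMClass.mat_all {P : DMPred S} (hP : DMClass P) (D : Matrix ι ι S) (hD : D * D = 0)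
    (hg : GradedMat D) (h : P (ι → S) (matAct D S)) (M : Type u) [AddCommGroup M] [Module S M] :
    P (ι → M) (matAct D M) := by
  obtain ⟨deg, hdeg⟩ := hg
  let s : ι → S := fun a => (((deg a).negOnePow : ℤ) : S)
  have h0 : ∀ (N : Type u) [AddCommGroup N] [Module S N], twMap (M := N) D s 0 = matAct D N := by
    intro N _ _
    ext x a
    simp [twMap_apply, matAct_apply]
  have hs : ∀ a, s a * s a = 1 := by
    intro a
    simp only [s]
    rw [← Int.cast_mul, ← Units.val_mul, Int.units_mul_self]; simp
  have hDs : ∀ a b, D a b * s b + s a * D a b = 0 := by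
    intro a b
    by_cases hb : D a b = 0
    · simp [hb]
    · have : s a = - s b := by
        simp only [s]
        rw [hdeg a b hb, Int.negOnePow_succ]
        simp
      rw [this]; ring
  have h1 := (hP.tw D hD s hs hDs deg hdeg).all_of_self (M := M) (d := 0)
    ⟨fun _ => rfl, by rw [h0]; exact h⟩ (fun _ => rfl)
  rw [← h0 M]
  exact h1.2
end mat

end PartA3

section PartA4
open DirectSum

section tors
variable {S : Type u} [CommRing S]
variable {M N : Type u} [AddCommGroup M] [Module S M] [AddCommGroup N] [Module S N]

lemma DMker_stable {g : M →ₗ[S] N} {d : M →ₗ[S] M} {d' : N →ₗ[S] N} (h : ∀ x, g (d x) = d' (g x)) :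
    ∀ x ∈ LinearMap.ker g, d x ∈ LinearMap.ker g := by
  intro x hx
  rw [LinearMap.mem_ker] at *
  rw [h, hx, map_zero]

lemma DMrange_stable {g : M →ₗ[S] N} {d : M →ₗ[S] M} {d' : N →ₗ[S] N} (h : ∀ x, g (d x) = d' (g x)) :
    ∀ x ∈ LinearMap.range g, d' x ∈ LinearMap.range g := by
  rintro _ ⟨x, rfl⟩
  exact ⟨d x, h x⟩

lemma DMses_map {g : M →ₗ[S] N} {d : M →ₗ[S] M} {d' : N →ₗ[S] N} (h : ∀ x, g (d x) = d' (g x))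
    (hd : ∀ x, d (d x) = 0) :
    DMIsSES (d.restrict (DMker_stable h)) d (d'.restrict (DMrange_stable h)) := by
  refine ⟨hd, Submodule.subtype _, g.rangeRestrict, fun x => rfl, fun x => Subtype.ext (h x),
    Subtype.val_injective, g.surjective_rangeRestrict, fun x => ?_⟩
  constructor
  · intro hx
    exact ⟨⟨x, congrArg Subtype.val hx⟩, rfl⟩
  · rintro ⟨y, rfl⟩
    exact Subtype.ext y.2

lemma DMses_quot {p : Submodule S M} {d : M →ₗ[S] M} (h : ∀ x ∈ p, d x ∈ p)
    (hd : ∀ x, d (d x) = 0) :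
    DMIsSES (d.restrict h) d (p.mapQ p d h) := by
  refine ⟨hd, Submodule.subtype _, p.mkQ, fun x => rfl, fun x => rfl,
    Subtype.val_injective, p.mkQ_surjective, fun x => ?_⟩
  constructor
  · intro hx
    exact ⟨⟨x, (Submodule.Quotient.mk_eq_zero p).1 hx⟩, rfl⟩
  · rintro ⟨y, rfl⟩
    exact (Submodule.Quotient.mk_eq_zero p).2 y.2

theorem DMClass.tors_all {P : DMPred S} (hP : DMClass P) (B : Set S)
    (hB : ∀ (M : Type u) [AddCommGroup M] [Module S M] (d : M →ₗ[S] M), (∀ x, d (d x) = 0) →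
      (∀ b ∈ B, ∀ m : M, b • m = 0) → P M d) (T : Finset S) :
    ∀ (M : Type u) [AddCommGroup M] [Module S M] (d : M →ₗ[S] M), (∀ x, d (d x) = 0) →
      (∀ b ∈ B, (∀ m : M, b • m = 0) ∨ (b ∈ T ∧ ∀ m : M, ∃ k : ℕ, b ^ k • m = 0)) → P M d := by
  classical
  induction T using Finset.induction_on with
  | empty =>
    intro M _ _ d hd h
    exact hB M d hd (fun b hb => (h b hb).resolve_right (by simp))
  | insert x T _ ih =>
    have sub : ∀ (M : Type u) [AddCommGroup M] [Module S M] (p : Submodule S M),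
      (∀ b ∈ B, (∀ m : M, b • m = 0) ∨ (b ∈ insert x T ∧ ∀ m : M, ∃ k : ℕ, b ^ k • m = 0)) →
      (∀ b ∈ B, (∀ m : p, b • m = 0) ∨ (b ∈ insert x T ∧ ∀ m : p, ∃ k : ℕ, b ^ k • m = 0)) := by
      intro M _ _ p h b hb
      refine (h b hb).imp (fun h m => Subtype.ext (h m.1)) (fun h => ⟨h.1, fun m => ?_⟩)
      obtain ⟨k, hk⟩ := h.2 m.1
      exact ⟨k, Subtype.ext hk⟩
    have claim : ∀ (k : ℕ) (M : Type u) [AddCommGroup M] [Module S M] (d : M →ₗ[S] M),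
      (∀ x, d (d x) = 0) →
      (∀ b ∈ B, (∀ m : M, b • m = 0) ∨ (b ∈ insert x T ∧ ∀ m : M, ∃ k : ℕ, b ^ k • m = 0)) →
      (∀ m : M, x ^ k • m = 0) → P M d := by
      intro k
      induction k with
      | zero =>
        intro M _ _ d _ _ h
        haveI : Subsingleton M := ⟨fun a b => by rw [← one_smul S a, ← one_smul S b, ← pow_zero x, h, h]⟩
        exact hP.of_subsingleton M d
      | succ k ihk =>
        intro M _ _ d hd h hk
        have hc : ∀ m, LinearMap.lsmul S M x (d m) = d (LinearMap.lsmul S M x m) := by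
          intro m; simp
        refine hP.ses₂ _ _ _ _ _ _ (DMses_map hc hd) ?_ ?_
        · apply ih
          · intro m; exact Subtype.ext (hd m.1)
          · intro b hb
            by_cases hbx : b = x
            · left
              intro m
              rw [hbx]
              exact Subtype.ext m.2
            · exact (sub M _ h b hb).imp id
                (fun h => ⟨(Finset.mem_insert.1 h.1).resolve_left hbx, h.2⟩)
        · apply ihk
          · intro m; exact Subtype.ext (hd m.1)
          · exact sub M _ h
          · rintro ⟨_, m, rfl⟩
            apply Subtype.ext
            have := hk m
            rwa [pow_succ, mul_smul] at this
    intro M _ _ d hd h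
    by_cases hxB : ∀ m : M, ∃ k : ℕ, x ^ k • m = 0
    · have hc : ∀ k m, LinearMap.lsmul S M (x ^ k) (d m) = d (LinearMap.lsmul S M (x ^ k) m) := by
        intro k m; simp
      refine hP.telescope (M := fun k => LinearMap.ker (LinearMap.lsmul S M (x ^ k)))
        (fun k => Submodule.inclusion (fun m hm => ?_)) (fun k => d.restrict (DMker_stable (hc k)))
        (fun _ _ => rfl) d (fun k => Submodule.subtype _) (fun _ _ => rfl) (fun _ _ => rfl) ?_ ?_ ?_
      · rw [LinearMap.mem_ker, LinearMap.lsmul_apply] at *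
        rw [pow_succ', mul_smul, hm, smul_zero]
      · intro m
        obtain ⟨k, hk⟩ := hxB m
        exact ⟨k, ⟨m, hk⟩, rfl⟩
      · intro k m hm
        have : m = 0 := Subtype.ext hm
        rw [this]
        exact DMDies.zero k
      · intro k
        apply claim k
        · intro m; exact Subtype.ext (hd m.1)
        · exact sub M _ h
        · intro m; exact Subtype.ext m.2
    · refine ih M d hd (fun b hb => (h b hb).imp id (fun h => ⟨?_, h.2⟩))
      refine (Finset.mem_insert.1 h.1).resolve_left ?_
      rintro rfl
      exact hxB h.2

end tors

section loc
variable {S : Type u} [CommRing S] (x : S)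
variable (M : Type u) [AddCommGroup M] [Module S M]

abbrev LMx := LocalizedModule (Submonoid.powers x) M

noncomputable abbrev jx : M →ₗ[S] LMx x M := LocalizedModule.mkLinearMap (Submonoid.powers x) M

variable {M}

noncomputable def mapx (d : M →ₗ[S] M) : LMx x M →ₗ[S] LMx x M :=
  IsLocalizedModule.map (Submonoid.powers x) (jx x M) (jx x M) d

lemma mapx_jx (d : M →ₗ[S] M) (m : M) : jx x M (d m) = mapx x d (jx x M m) := by
  rw [mapx, IsLocalizedModule.map_apply]

lemma jx_surj (y : LMx x M) : ∃ (k : ℕ) (m : M), x ^ k • y = jx x M m := by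
  obtain ⟨⟨m, ⟨_, k, rfl⟩⟩, h⟩ := IsLocalizedModule.surj (Submonoid.powers x) (jx x M) y
  exact ⟨k, m, h⟩

lemma xpow_inj (k : ℕ) (y z : LMx x M) (h : x ^ k • y = x ^ k • z) : y = z :=
  IsLocalizedModule.smul_injective (jx x M) (⟨x ^ k, k, rfl⟩ : Submonoid.powers x) h

lemma xpow_surj (k : ℕ) (y : LMx x M) : ∃ z, x ^ k • z = y := by
  have := (Module.End.isUnit_iff _).1
    (IsLocalizedModule.map_units (jx x M) (⟨x ^ k, k, rfl⟩ : Submonoid.powers x))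
  exact this.2 y

lemma jx_ker (m : M) : jx x M m = 0 ↔ ∃ k : ℕ, x ^ k • m = 0 := by
  rw [IsLocalizedModule.eq_zero_iff (Submonoid.powers x)]
  constructor
  · rintro ⟨⟨_, k, rfl⟩, h⟩; exact ⟨k, h⟩
  · rintro ⟨k, h⟩; exact ⟨⟨x ^ k, k, rfl⟩, h⟩

lemma mapx_htpy (d h : M →ₗ[S] M) (c : S) (H : ∀ m, c • m = d (h m) + h (d m)) (y : LMx x M) :
    c • y = mapx x d (mapx x h y) + mapx x h (mapx x d y) := by
  obtain ⟨k, m, hm⟩ := jx_surj x y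
  apply xpow_inj x k
  rw [smul_add, ← map_smul, ← map_smul, ← map_smul (mapx x h), ← map_smul (mapx x d), hm, smul_comm, hm,
    ← mapx_jx, ← mapx_jx, ← mapx_jx, ← mapx_jx, ← map_smul, H, map_add]

lemma mapx_sq (d : M →ₗ[S] M) (hd : ∀ m, d (d m) = 0) (y : LMx x M) : mapx x d (mapx x d y) = 0 := by
  obtain ⟨k, m, hm⟩ := jx_surj x y
  apply xpow_inj x k
  rw [← map_smul, ← map_smul, hm, ← mapx_jx, ← mapx_jx, hd, map_zero, smul_zero]

lemma mapx_zero : mapx x (0 : M →ₗ[S] M) = 0 := by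
  simp [mapx]

lemma mapx_acyclic (d : M →ₗ[S] M) (hd : ∀ m, d (d m) = 0)
    (h : M →ₗ[S] M) (n : ℕ) (H : ∀ m, x ^ n • m = d (h m) + h (d m)) (y : LMx x M)
    (hy : mapx x d y = 0) : ∃ z, mapx x d z = y := by
  obtain ⟨z, rfl⟩ := xpow_surj x n y
  have hz : mapx x d z = 0 := by
    apply xpow_inj x n
    rw [← map_smul, hy, smul_zero]
  exact ⟨mapx x h z, by rw [mapx_htpy x d h _ H, hz, map_zero, add_zero]⟩

noncomputable def cokx (d : M →ₗ[S] M) :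
    (LMx x M ⧸ LinearMap.range (jx x M)) →ₗ[S] (LMx x M ⧸ LinearMap.range (jx x M)) :=
  Submodule.mapQ _ _ (mapx x d) (DMrange_stable (mapx_jx x d))

lemma cokx_mk (d : M →ₗ[S] M) (y : LMx x M) :
   cokx x d (Submodule.mkQ _ y) = Submodule.mkQ _ (mapx x d y) := rfl

lemma cokx_sq (d : M →ₗ[S] M) (hd : ∀ m, d (d m) = 0) (y) : cokx x d (cokx x d y) = 0 := by
  obtain ⟨y, rfl⟩ := Submodule.mkQ_surjective _ y
  rw [cokx_mk, cokx_mk, mapx_sq x d hd, map_zero]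

lemma cokx_tors (y : LMx x M ⧸ LinearMap.range (jx x M)) : ∃ k : ℕ, x ^ k • y = 0 := by
  obtain ⟨y, rfl⟩ := Submodule.mkQ_surjective _ y
  obtain ⟨k, m, hm⟩ := jx_surj x y
  refine ⟨k, ?_⟩
  rw [← map_smul, hm]
  exact (Submodule.Quotient.mk_eq_zero _).2 ⟨m, rfl⟩

lemma cokx_tors_of (b : S) (hb : ∀ m : M, ∃ k : ℕ, b ^ k • m = 0)
    (y : LMx x M ⧸ LinearMap.range (jx x M)) : ∃ k : ℕ, b ^ k • y = 0 := by
  obtain ⟨y, rfl⟩ := Submodule.mkQ_surjective _ y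
  obtain ⟨k, m, hm⟩ := jx_surj x y
  obtain ⟨l, hl⟩ := hb m
  refine ⟨l, ?_⟩
  have : b ^ l • y = 0 := by
    apply xpow_inj x k
    rw [smul_comm, hm, ← map_smul, hl, map_zero, smul_zero]
  rw [← map_smul, this, map_zero]

lemma cokx_htpy (d h : M →ₗ[S] M) (c : S) (H : ∀ m, c • m = d (h m) + h (d m)) (y) :
    c • y = cokx x d (cokx x h y) + cokx x h (cokx x d y) := by
  obtain ⟨y, rfl⟩ := Submodule.mkQ_surjective _ y
  rw [cokx_mk, cokx_mk, cokx_mk, cokx_mk, ← map_add, ← mapx_htpy x d h c H, map_smul]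

noncomputable def kerx (d : M →ₗ[S] M) : LinearMap.ker (jx x M) →ₗ[S] LinearMap.ker (jx x M) :=
  d.restrict (DMker_stable (mapx_jx x d))

lemma DMClass.loc_step {P : DMPred S} (hP : DMClass P) (d : M →ₗ[S] M) (hd : ∀ m, d (d m) = 0)
    (h1 : P (LMx x M) (mapx x d)) (h2 : P _ (kerx x d)) (h3 : P _ (cokx x d)) : P M d := by
  refine hP.ses₂ _ _ _ _ _ _ (DMses_map (mapx_jx x d) hd) h2 ?_
  exact hP.ses₁ _ _ _ _ _ _ (DMses_quot (DMrange_stable (mapx_jx x d)) (mapx_sq x d hd)) h1 h3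

theorem DMClass.fin_htpy {P : DMPred S} (hP : DMClass P) (B : Finset S)
    (hB : ∀ (M : Type u) [AddCommGroup M] [Module S M] (d : M →ₗ[S] M), (∀ x, d (d x) = 0) →
      (∀ b ∈ B, ∀ m : M, b • m = 0) → P M d) (T : Finset S) :
    ∀ (M : Type u) [AddCommGroup M] [Module S M] (d : M →ₗ[S] M), (∀ x, d (d x) = 0) →
      (∀ b ∈ B, (∀ m : M, ∃ k : ℕ, b ^ k • m = 0) ∨ (b ∈ T ∧
        ∃ (n : ℕ) (h : M →ₗ[S] M), ∀ m, b ^ n • m = d (h m) + h (d m))) → P M d := by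
  classical
  induction T using Finset.induction_on with
  | empty =>
    intro M _ _ d hd h
    exact hP.tors_all (B : Set S) hB B M d hd
      (fun b hb => Or.inr ⟨hb, (h b hb).resolve_right (by simp)⟩)
  | insert x T _ ih =>
    intro M _ _ d hd h
    by_cases hx : ∃ (n : ℕ) (h : M →ₗ[S] M), ∀ m, x ^ n • m = d (h m) + h (d m)
    · obtain ⟨n, hh, H⟩ := hx
      refine hP.loc_step x d hd (hP.acyclic _ _ (mapx_sq x d hd) (mapx_acyclic x d hd hh n H)) ?_ ?_
      · apply ih
        · intro m; exact Subtype.ext (hd m.1)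
        · intro b hb
          by_cases hbx : b = x
          · left
            intro m
            obtain ⟨k, hk⟩ := (jx_ker x m.1).1 m.2
            exact ⟨k, Subtype.ext (by rw [hbx]; exact hk)⟩
          · refine (h b hb).imp (fun h m => ?_) (fun h =>
              ⟨(Finset.mem_insert.1 h.1).resolve_left hbx, ?_⟩)
            · obtain ⟨k, hk⟩ := h m.1
              exact ⟨k, Subtype.ext hk⟩
            · obtain ⟨_, n, h', H'⟩ := h
              exact ⟨n, kerx x h', fun m => Subtype.ext (H' m.1)⟩
      · apply ih
        · exact cokx_sq x d hd
        · intro b hb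
          by_cases hbx : b = x
          · left
            rw [hbx]
            exact cokx_tors x
          · refine (h b hb).imp (fun h => cokx_tors_of x b h) (fun h =>
              ⟨(Finset.mem_insert.1 h.1).resolve_left hbx, ?_⟩)
            obtain ⟨_, n, h', H'⟩ := h
            exact ⟨n, cokx x h', cokx_htpy x d h' _ H'⟩
    · refine ih M d hd (fun b hb => (h b hb).imp id (fun h => ⟨?_, h.2⟩))
      refine (Finset.mem_insert.1 h.1).resolve_left ?_
      rintro rfl
      exact hx h.2

end loc

end PartA4

section PartA5
open DirectSum

section Jm
variable {S : Type u} [CommRing S] {ι κ : Type} [Fintype ι] [Fintype κ] [DecidableEq ι] [DecidableEq κ]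

def Jm (D : Matrix ι ι S) (x : S) : Prop := ∃ h : Matrix ι ι S, x • (1 : Matrix ι ι S) = D * h + h * D

lemma Jm.mul {D : Matrix ι ι S} {x : S} (h : Jm D x) (y : S) : Jm D (y * x) := by
  obtain ⟨h, H⟩ := h
  exact ⟨y • h, by rw [mul_smul, H, smul_add, Matrix.mul_smul, Matrix.smul_mul]⟩

lemma Jm.det {D : Matrix ι ι S} (hD : D * D = 0) (h : Matrix ι ι S) : Jm D (D * h + h * D).det := by
  set w := D * h + h * D with hw
  have hc : D * w = w * D := by
    rw [hw, mul_add, add_mul, ← mul_assoc, hD, mul_assoc h, hD, zero_mul, mul_zero, zero_add, add_zero,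
      mul_assoc]
  have h1 := Matrix.aeval_self_charpoly w
  rw [← Polynomial.divX_mul_X_add w.charpoly] at h1
  set q := Polynomial.aeval w w.charpoly.divX with hq
  have hqc : D * q = q * D := (Algebra.commute_of_mem_adjoin_singleton_of_commute
    (Polynomial.aeval_mem_adjoin_singleton S w) hc)
  rw [map_add, map_mul, Polynomial.aeval_X, Polynomial.aeval_C, ← hq] at h1
  have hqw : q * w = w * q := ((Algebra.commute_of_mem_adjoin_singleton_of_commute
    (Polynomial.aeval_mem_adjoin_singleton S w) (Commute.refl w)) : Commute w q).symm
  rw [Matrix.det_eq_sign_charpoly_coeff]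
  apply Jm.mul
  refine ⟨-(h * q), ?_⟩
  rw [Algebra.algebraMap_eq_smul_one] at h1
  rw [eq_neg_of_add_eq_zero_right h1, hqw]
  conv_lhs => rw [hw]
  rw [add_mul, mul_assoc h, hqc]
  simp only [mul_neg, neg_mul, mul_assoc, neg_add]

lemma Jm.quot {D : Matrix ι ι S} (hD : D * D = 0) {S' : Type u} [CommRing S'] (f : S →+* S')
    (hf : Function.Surjective f) (x : S') (h : Jm (D.map f) x) :
    ∃ y, Jm D y ∧ ∃ n : ℕ, f y = x ^ n := by
  obtain ⟨h, H⟩ := h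
  choose g hg using hf
  let h' : Matrix ι ι S := h.map g
  have hh' : h'.map f = h := by ext a b; simp [h', hg]
  refine ⟨_, Jm.det hD h', Fintype.card ι, ?_⟩
  rw [RingHom.map_det]
  have : f.mapMatrix (D * h' + h' * D) = x • (1 : Matrix ι ι S') := by
    rw [map_add, map_mul, map_mul, H]
    simp only [RingHom.mapMatrix_apply, hh']
  rw [this, Matrix.det_smul, Matrix.det_one, mul_one]

lemma clear_denoms (δ : S) (S' : Type u) [CommRing S'] [Algebra S S'] [IsLocalization.Away δ S']
    {τ : Type} [Fintype τ] (f : τ → S') :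
    ∃ (m : ℕ) (a : τ → S), ∀ i, algebraMap S S' (a i) = algebraMap S S' δ ^ m * f i := by
  choose n a h using fun i => IsLocalization.Away.surj δ (f i)
  refine ⟨∑ i, n i, fun i => δ ^ (∑ i, n i - n i) * a i, fun i => ?_⟩
  have : n i ≤ ∑ i, n i := Finset.single_le_sum (f := n) (fun _ _ => Nat.zero_le _) (Finset.mem_univ i)
  rw [map_mul, ← h, map_pow, mul_comm (f i), ← mul_assoc, ← pow_add, Nat.sub_add_cancel this]

lemma kill_denoms (δ : S) (S' : Type u) [CommRing S'] [Algebra S S'] [IsLocalization.Away δ S']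
    {τ : Type} [Fintype τ] (f : τ → S) (hf : ∀ i, algebraMap S S' (f i) = 0) :
    ∃ (m : ℕ), ∀ i, δ ^ m * f i = 0 := by
  have : ∀ i, ∃ n : ℕ, δ ^ n * f i = 0 := by
    intro i
    obtain ⟨n, hn⟩ := IsLocalization.Away.exists_of_eq (S := S') δ (a := f i) (b := 0) (by rw [hf, map_zero])
    exact ⟨n, by rw [hn, mul_zero]⟩
  choose n h using this
  refine ⟨∑ i, n i, fun i => ?_⟩
  have : n i ≤ ∑ i, n i := Finset.single_le_sum (f := n) (fun _ _ => Nat.zero_le _) (Finset.mem_univ i)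
  rw [← Nat.sub_add_cancel this, pow_add, mul_assoc, h, mul_zero]

lemma Jm.loc {D : Matrix ι ι S} (δ : S) (S' : Type u) [CommRing S'] [Algebra S S']
    [IsLocalization.Away δ S'] (x : S) (h : Jm (D.map (algebraMap S S')) (algebraMap S S' x)) :
    ∃ m : ℕ, Jm D (δ ^ m * x) := by
  obtain ⟨h, H⟩ := h
  obtain ⟨m, g, hg⟩ := clear_denoms δ S' (fun p : ι × ι => h p.1 p.2)
  let G : Matrix ι ι S := fun a b => g (a, b)
  have hG : (algebraMap S S').mapMatrix G = algebraMap S S' δ ^ m • h := by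
    ext a b
    exact hg (a, b)
  let E : Matrix ι ι S := (δ ^ m * x) • 1 - (D * G + G * D)
  have hE : (algebraMap S S').mapMatrix E = 0 := by
    have h1 : (algebraMap S S').mapMatrix ((δ ^ m * x) • (1 : Matrix ι ι S)) =
       algebraMap S S' δ ^ m • (algebraMap S S' x) • (1 : Matrix ι ι S') := by
      ext a b
      by_cases hab : a = b
      · simp [Matrix.one_apply, hab]
        rw [Algebra.smul_def, mul_comm]
      · simp [Matrix.one_apply, hab]
    simp only [E]
    rw [map_sub, map_add, map_mul, map_mul, hG, h1, H, RingHom.mapMatrix_apply, smul_add,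
      Matrix.mul_smul, Matrix.smul_mul, sub_self]
  obtain ⟨k, hk⟩ := kill_denoms δ S' (fun p : ι × ι => E p.1 p.2) (fun p => congrFun (congrFun hE p.1) p.2)
  refine ⟨k + m, δ ^ k • G, ?_⟩
  have : δ ^ k • E = 0 := by
    ext a b; exact hk (a, b)
  simp only [E] at this
  rw [smul_sub, sub_eq_zero, smul_add, ← Matrix.mul_smul, ← Matrix.smul_mul, ← mul_smul] at this
  rw [pow_add, mul_assoc, this]

structure MRetr (D : Matrix ι ι S) (D' : Matrix κ κ S) where
  i : Matrix ι κ S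
  r : Matrix κ ι S
  k : Matrix ι ι S
  ri : r * i = 1
  Di : D * i = i * D'
  rD : r * D = D' * r
  ir : i * r + (D * k + k * D) = 1

lemma MRetr.J {D : Matrix ι ι S} {D' : Matrix κ κ S} (w : MRetr D D') {x : S} (h : Jm D' x) : Jm D x := by
  obtain ⟨h, H⟩ := h
  refine ⟨x • w.k + w.i * h * w.r, ?_⟩
  have e1 : D * (w.i * h * w.r) + w.i * h * w.r * D = w.i * (D' * h + h * D') * w.r := by
    rw [← Matrix.mul_assoc, ← Matrix.mul_assoc, w.Di, Matrix.mul_assoc _ w.r D, w.rD]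
    simp only [Matrix.mul_add, Matrix.add_mul, Matrix.mul_assoc]
  have e2 : D * (x • w.k + w.i * h * w.r) + (x • w.k + w.i * h * w.r) * D =
      x • (D * w.k + w.k * D) + (D * (w.i * h * w.r) + w.i * h * w.r * D) := by
    rw [Matrix.mul_add, Matrix.add_mul, smul_add, Matrix.mul_smul, Matrix.smul_mul]
    abel
  rw [e2, e1, ← H, Matrix.mul_smul, Matrix.smul_mul, Matrix.mul_one, ← smul_add, add_comm, w.ir]

lemma MRetr.P {D : Matrix ι ι S} {D' : Matrix κ κ S} (w : MRetr D D') {P : DMPred S} (hP : DMClass P)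
    (M : Type u) [AddCommGroup M] [Module S M] (h : P (ι → M) (matAct D M)) :
    P (κ → M) (matAct D' M) := by
  refine hP.retract (matAct w.i M) (matAct w.r M) ?_ ?_ ?_ h
  · intro x; rw [← matAct_mul, ← matAct_mul, w.Di]
  · intro x; rw [← matAct_mul, ← matAct_mul, w.rD]
  · intro x; rw [← matAct_mul, w.ri, matAct_one]

lemma exists_MRetr (D : Matrix ι ι S) (hD : D * D = 0) (hg : GradedMat D) (a b : ι) (hab : a ≠ b)
    (hne : D a b ≠ 0) (v : S) (hv : D a b * v = 1) :
    ∃ D' : Matrix {c // c ≠ a ∧ c ≠ b} {c // c ≠ a ∧ c ≠ b} S, Nonempty (MRetr D D') ∧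
      D' * D' = 0 ∧ GradedMat D' := by
  obtain ⟨deg, hdeg⟩ := hg
  let k : Matrix ι ι S := Matrix.single b a v
  have hkk : k * k = 0 := Matrix.single_mul_single_of_ne _ _ _ _ hab _
  have hkDk : k * D * k = k := by
    simp only [k]
    rw [Matrix.single_mul_mul_single, mul_comm v, mul_assoc, mul_comm v, ← mul_assoc, hv, one_mul]
  let π : Matrix ι ι S := 1 - (D * k + k * D)
  have hDπ : D * π = D - D * k * D := by
    simp only [π, mul_sub, mul_add, mul_one, ← mul_assoc, hD, zero_mul, zero_add]
  have hπD : π * D = D - D * k * D := by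
    simp only [π, sub_mul, add_mul, one_mul, mul_assoc, hD, mul_zero, add_zero]
  have hπk : π * k = 0 := by
    simp only [π, sub_mul, add_mul, one_mul, hkDk]
    rw [mul_assoc, hkk, mul_zero, zero_add, sub_self]
  have hkπ : k * π = 0 := by
    simp only [π, mul_sub, mul_add, mul_one, ← mul_assoc, hkDk, hkk]
    simp
  have hππ : π * π = π := by
    have : π * π = π * 1 - (π * D * k + π * k * D) := by
      conv_lhs => enter [2]; simp only [π]
      rw [mul_sub, mul_add, mul_assoc, mul_assoc]
    rw [this, hπk, hπD, ← hDπ, mul_assoc, hπk]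
    simp
  have hcol : ∀ x, π x b = 0 := by
    intro x
    have h1 := congrFun (congrFun hπk x) a
    simp only [k, Matrix.mul_single_apply_same, Matrix.zero_apply] at h1
    have := congrArg (· * D a b) h1
    simpa [mul_assoc, mul_comm v, hv] using this
  have hrow : ∀ x, π a x = 0 := by
    intro x
    have h1 := congrFun (congrFun hkπ b) x
    simp only [k, Matrix.single_mul_apply_same, Matrix.zero_apply] at h1
    have := congrArg (D a b * ·) h1
    simpa [← mul_assoc, hv] using this
  let i : Matrix ι {c // c ≠ a ∧ c ≠ b} S := π.submatrix id Subtype.val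
  let r : Matrix {c // c ≠ a ∧ c ≠ b} ι S := π.submatrix Subtype.val id
  have hir : i * r = π := by
    ext x y
    rw [← hππ, Matrix.mul_apply, Matrix.mul_apply]
    simp only [i, r, Matrix.submatrix_apply, id]
    symm
    rw [← Finset.sum_subtype (Finset.univ.filter (fun c => c ≠ a ∧ c ≠ b)) (by simp)
      (fun c => π x c * π c y)]
    symm
    refine Finset.sum_subset (Finset.subset_univ _) (fun c _ hc => ?_)
    by_cases h1 : c = a
    · rw [h1, hrow, mul_zero]
    · have h2 : c = b := by
        by_contra h2
        exact hc (by simp [h1, h2])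
      rw [h2, hcol, zero_mul]
  have hπi : π * i = i := by
    have : π * i = (π * π).submatrix id Subtype.val := rfl
    rw [this, hππ]
  have hrπ : r * π = r := by
    have : r * π = (π * π).submatrix Subtype.val id := rfl
    rw [this, hππ]
  have hri : r * i = 1 := by
    have : r * i = (π * π).submatrix Subtype.val Subtype.val := rfl
    rw [this, hππ]
    ext ⟨x, hx⟩ ⟨y, hy⟩
    simp only [π, Matrix.submatrix_apply, Matrix.sub_apply, Matrix.add_apply, k]
    rw [Matrix.mul_single_apply_of_ne _ _ _ _ _ hy.1, Matrix.single_mul_apply_of_ne _ _ _ _ _ hx.2]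
    simp [Matrix.one_apply, Subtype.ext_iff]
  have hDi : D * i = i * (r * D * i) := by
    rw [← Matrix.mul_assoc, ← Matrix.mul_assoc, hir, hπD, ← hDπ, Matrix.mul_assoc D, hπi]
  have hrD : r * D = (r * D * i) * r := by
    rw [Matrix.mul_assoc, hir, Matrix.mul_assoc r, hDπ, ← hπD, ← Matrix.mul_assoc, hrπ]
  refine ⟨r * D * i, ⟨⟨i, r, k, hri, hDi, hrD, ?_⟩⟩, ?_, deg ∘ Subtype.val, ?_⟩
  · rw [hir]; simp only [π]; abel
  · rw [Matrix.mul_assoc (r * D) i, ← hDi, ← Matrix.mul_assoc, Matrix.mul_assoc r D D, hD]; simp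
  · rintro ⟨x, hx⟩ ⟨y, hy⟩ hne2
    have : r * D * i = (π * D * π).submatrix Subtype.val Subtype.val := rfl
    rw [this, hπD, ← hDπ, Matrix.mul_assoc, hππ, hDπ] at hne2
    simp only [Matrix.submatrix_apply, Matrix.sub_apply, Matrix.mul_assoc] at hne2
    simp only [Function.comp]
    by_cases h1 : D x y = 0
    · have h2 : (D * (k * D)) x y = D x b * (v * D a y) := by
        rw [Matrix.mul_apply, Finset.sum_eq_single b]
        · simp [k]
        · intro c _ hc
          simp only [k]
          rw [Matrix.single_mul_apply_of_ne _ _ _ _ _ hc, mul_zero]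
        · simp
      rw [h1, h2, zero_sub, neg_ne_zero] at hne2
      have h3 := hdeg x b (left_ne_zero_of_mul hne2)
      have h4 := hdeg a y (right_ne_zero_of_mul (right_ne_zero_of_mul hne2))
      have h5 := hdeg a b hne
      omega
    · exact hdeg x y h1

end Jm

end PartA5

section PartA6
open DirectSum

section main
variable {S : Type u} [CommRing S]

lemma DMtors_span {M : Type u} [AddCommGroup M] [Module S M] (B : Set S)
    (h : ∀ b ∈ B, ∀ m : M, b • m = 0) : Module.IsTorsionBySet S M (Ideal.span B : Ideal S) := by
  intro m ⟨a, ha⟩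
  change a • m = 0
  induction ha using Submodule.span_induction with
  | mem b hb => exact h b hb m
  | zero => simp
  | add x y _ _ hx hy => rw [add_smul, hx, hy, add_zero]
  | smul c x _ hx => rw [smul_assoc, hx, smul_zero]

theorem DMClass.killed_of_quot {P : DMPred S} (hP : DMClass P) (B : Set S)
    (hB : P (S ⧸ Ideal.span B) 0)
    (M : Type u) [AddCommGroup M] [Module S M] (d : M →ₗ[S] M) (hd : ∀ x, d (d x) = 0)
    (hM : ∀ b ∈ B, ∀ m : M, b • m = 0) : P M d := by
  have h1 : DMrestr (Ideal.Quotient.mk (Ideal.span B)) P (S ⧸ Ideal.span B) 0 := by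
    rw [DMrestr_iff (d := 0)]
    · exact hB
    · intro s x; rfl
    · intro x; rfl
  have ht := DMtors_span B hM
  letI := ht.module
  let d' : M →ₗ[S ⧸ Ideal.span B] M :=
    { toFun := d
      map_add' := d.map_add
      map_smul' := by
        intro s x
        obtain ⟨s, rfl⟩ := Ideal.Quotient.mk_surjective s
        rw [ht.mk_smul, d.map_smul, RingHom.id_apply, ht.mk_smul] }
  have h2 := (hP.restr (Ideal.Quotient.mk (Ideal.span B))).all_of_self (d := d') h1 hd
  rw [DMrestr_iff (d := d)] at h2
  · exact h2
  · intro s x; exact (ht.mk_smul s x).symm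
  · intro x; rfl

theorem DMClass.killed_all {P : DMPred S} (hP : DMClass P) (B : Set S)
    (hB : ∀ (M : Type u) [AddCommGroup M] [Module S M], (∀ b ∈ B, ∀ m : M, b • m = 0) → P M 0)
    (M : Type u) [AddCommGroup M] [Module S M] (d : M →ₗ[S] M) (hd : ∀ x, d (d x) = 0)
    (hM : ∀ b ∈ B, ∀ m : M, b • m = 0) : P M d := by
  refine hP.killed_of_quot B (hB _ ?_) M d hd hM
  intro b hb m
  obtain ⟨s, rfl⟩ := Ideal.Quotient.mk_surjective m
  rw [← Ideal.Quotient.mk_eq_mk, ← Submodule.Quotient.mk_smul, Submodule.Quotient.mk_eq_zero, smul_eq_mul]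
  exact Ideal.mul_mem_right _ _ (Ideal.subset_span hb)

lemma DMrestr_mat {S' : Type u} [CommRing S'] (f : S →+* S') {P : DMPred S}
    {ι : Type} [Fintype ι] (D : Matrix ι ι S)
    (h : ∀ (M : Type u) [AddCommGroup M] [Module S M], P (ι → M) (matAct D M))
    (M : Type u) [AddCommGroup M] [Module S' M] : DMrestr f P (ι → M) (matAct (D.map f) M) := by
  letI : Module S M := Module.compHom M f
  rw [DMrestr_iff (d := matAct D M)]
  · exact h M
  · intro s x; rfl
  · intro x; rfl

lemma tors_pow {M : Type u} [AddCommGroup M] [Module S M] (δ β x y : S) (N : ℕ)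
    (h : x ^ N = β + δ * y) (m : M) (hβ : β • m = 0) (k : ℕ) (hk : δ ^ k • m = 0) :
    ∃ l : ℕ, x ^ l • m = 0 := by
  refine ⟨N * k, ?_⟩
  obtain ⟨c, hc⟩ : ∃ c, (β + δ * y) ^ k = c * β + y ^ k * δ ^ k := by
    have : β ∣ (β + δ * y) ^ k - (δ * y) ^ k := by
      have := sub_dvd_pow_sub_pow (β + δ * y) (δ * y) k
      simpa using this
    obtain ⟨c, hc⟩ := this
    exact ⟨c, by linear_combination hc⟩
  rw [pow_mul, h, hc, add_smul, mul_smul, mul_smul, hβ, hk, smul_zero, smul_zero, add_zero]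

theorem main_alg : ∀ (c z : ℕ) (S : Type u) [CommRing S] (P : DMPred S) (_ : DMClass P)
    (ι : Type) [Fintype ι] [DecidableEq ι] (D : Matrix ι ι S) (_ : Fintype.card ι ≤ c)
    (_ : Nat.card {p : ι × ι // D p.1 p.2 ≠ 0} ≤ z) (_ : D * D = 0) (_ : GradedMat D)
    (_ : ∀ (M : Type u) [AddCommGroup M] [Module S M], P (ι → M) (matAct D M)),
    ∃ B : Finset S, (∀ x ∈ B, ∃ n : ℕ, Jm D (x ^ n)) ∧
      ∀ (M : Type u) [AddCommGroup M] [Module S M], (∀ b ∈ B, ∀ m : M, b • m = 0) → P M 0 := by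
  classical
  intro c
  induction c with
  | zero =>
    intro z S _ P hP ι _ _ D hc _ _ _ _
    haveI : IsEmpty ι := Fintype.card_eq_zero_iff.1 (by omega)
    refine ⟨{1}, fun x _ => ⟨0, 0, Subsingleton.elim _ _⟩, fun M _ _ h => ?_⟩
    haveI : Subsingleton M := ⟨fun a b => by
      rw [← one_smul S a, ← one_smul S b, h 1 (by simp), h 1 (by simp)]⟩
    exact hP.of_subsingleton M 0
  | succ c ihc =>
  intro z
  induction z using Nat.strong_induction_on with
  | _ z ihz =>
  intro S _ P hP ι _ _ D hc hz hD hg h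
  by_cases hemp : IsEmpty ι
  · exact ihc z S P hP ι D (by rw [Fintype.card_eq_zero]; omega) hz hD hg h
  rw [not_isEmpty_iff] at hemp
  by_cases h0 : D = 0
  · subst h0
    refine ⟨∅, by simp, fun M _ _ _ => ?_⟩
    obtain ⟨a⟩ := hemp
    refine hP.retract (LinearMap.single S (fun _ : ι => M) a) (LinearMap.proj a) ?_ ?_ ?_ (h M)
    · intro x; rw [matAct_zero]; simp
    · intro x; rw [matAct_zero]; simp
    · intro x; simp
  obtain ⟨a, b, hne⟩ : ∃ a b, D a b ≠ 0 := by
    by_contra hcon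
    push Not at hcon
    exact h0 (by ext a b; exact hcon a b)
  have hab : a ≠ b := by
    rintro rfl
    obtain ⟨deg, hdeg⟩ := hg
    have := hdeg a a hne
    omega
  set δ := D a b with hδ
  -- quotient
  let mk := Ideal.Quotient.mk (Ideal.span {δ})
  have hq : ∃ B : Finset (S ⧸ Ideal.span {δ}), (∀ x ∈ B, ∃ n : ℕ, Jm (D.map mk) (x ^ n)) ∧
      ∀ (M : Type u) [AddCommGroup M] [Module (S ⧸ Ideal.span {δ}) M],
        (∀ b ∈ B, ∀ m : M, b • m = 0) → DMrestr mk P M 0 := by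
    refine ihz (Nat.card {p : ι × ι // (D.map mk) p.1 p.2 ≠ 0}) ?_ _ _ (hP.restr mk) ι (D.map mk) hc le_rfl
      ?_ ?_ (fun M _ _ => DMrestr_mat mk D h M)
    · refine lt_of_lt_of_le ?_ hz
      have hinj : ∀ p : {p : ι × ι // (D.map mk) p.1 p.2 ≠ 0}, D p.1.1 p.1.2 ≠ 0 := by
        intro p hp
        exact p.2 (by rw [Matrix.map_apply, hp, map_zero])
      classical
      haveI := Fintype.ofFinite {p : ι × ι // (D.map mk) p.1 p.2 ≠ 0}
      haveI := Fintype.ofFinite {p : ι × ι // D p.1 p.2 ≠ 0}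
      rw [Nat.card_eq_fintype_card, Nat.card_eq_fintype_card]
      refine Fintype.card_lt_of_injective_of_notMem
        (fun p => (⟨p.1, hinj p⟩ : {p : ι × ι // D p.1 p.2 ≠ 0})) ?_ (b := ⟨(a, b), hne⟩) ?_
      · intro p q hpq
        exact Subtype.ext (Subtype.mk.inj hpq)
      · rintro ⟨p, hp⟩
        have h1 : p.1 = (a, b) := congrArg Subtype.val hp
        apply p.2
        rw [h1, Matrix.map_apply]
        exact Ideal.Quotient.eq_zero_iff_mem.2 (Ideal.subset_span rfl)
    · rw [← Matrix.map_mul, hD]; simp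
    · obtain ⟨deg, hdeg⟩ := hg
      exact ⟨deg, fun a b hab => hdeg a b (fun h => hab (by rw [Matrix.map_apply, h, map_zero]))⟩
  obtain ⟨B₂, hB₂, hB₂'⟩ := hq
  -- localization
  let S' := Localization.Away δ
  let al := algebraMap S S'
  obtain ⟨v, hv⟩ : ∃ v : S', al δ * v = 1 :=
    (IsLocalization.Away.algebraMap_isUnit (S := S') δ).exists_right_inv
  have hl : ∃ A : Finset S', (∀ x ∈ A, ∃ n : ℕ, Jm (D.map al) (x ^ n)) ∧
      ∀ (M : Type u) [AddCommGroup M] [Module S' M],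
        (∀ b ∈ A, ∀ m : M, b • m = 0) → DMrestr al P M 0 := by
    by_cases htriv : Subsingleton S'
    · refine ⟨∅, by simp, fun M _ _ _ => ?_⟩
      haveI : Subsingleton M := Module.subsingleton S' M
      exact (hP.restr al).of_subsingleton M 0
    rw [not_subsingleton_iff_nontrivial] at htriv
    have hD' : D.map al * D.map al = 0 := by rw [← Matrix.map_mul, hD]; simp
    have hg' : GradedMat (D.map al) := by
      obtain ⟨deg, hdeg⟩ := hg
      exact ⟨deg, fun a b hab => hdeg a b (fun h => hab (by rw [Matrix.map_apply, h, map_zero]))⟩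
    obtain ⟨D'', ⟨w⟩, h1, h2⟩ := exists_MRetr (D.map al) hD' hg' a b hab
      (by
        intro h
        rw [Matrix.map_apply] at h
        rw [h, zero_mul] at hv
        exact zero_ne_one hv) v hv
    obtain ⟨A, hA, hA'⟩ := ihc _ S' (DMrestr al P) (hP.restr al) _ D''
      (by
        have : Fintype.card {c // c ≠ a ∧ c ≠ b} < Fintype.card ι :=
          Fintype.card_subtype_lt (x := a) (by simp)
        omega) le_rfl h1 h2 (fun M _ _ => w.P (hP.restr al) M (DMrestr_mat al D h M))
    exact ⟨A, fun x hx => (hA x hx).imp (fun n h => w.J h), hA'⟩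
  obtain ⟨A, hA, hA'⟩ := hl
  -- lifts
  choose lk ll hll using fun x : S' => IsLocalization.Away.surj δ x
  have hβ : ∀ x : S ⧸ Ideal.span {δ}, ∃ y, x ∈ B₂ → Jm D y ∧ ∃ n : ℕ, mk y = x ^ n := by
    intro x
    by_cases hx : x ∈ B₂
    · obtain ⟨n, hn⟩ := hB₂ x hx
      obtain ⟨y, h1, m, h2⟩ := Jm.quot hD mk Ideal.Quotient.mk_surjective _ hn
      exact ⟨y, fun _ => ⟨h1, n * m, by rw [h2, pow_mul]⟩⟩
    · exact ⟨0, fun h => absurd h hx⟩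
  choose β hβ using hβ
  let lx : S ⧸ Ideal.span {δ} → S := Function.surjInv (Ideal.Quotient.mk_surjective)
  have hlx : ∀ x, mk (lx x) = x := Function.surjInv_eq _
  refine ⟨A.image (fun x => δ * ll x) ∪ B₂.image β, ?_, ?_⟩
  · intro x hx
    rw [Finset.mem_union, Finset.mem_image, Finset.mem_image] at hx
    rcases hx with ⟨x, hx, rfl⟩ | ⟨x, hx, rfl⟩
    · obtain ⟨n, hn⟩ := hA x hx
      have h1 : Jm (D.map al) (al (ll x ^ n)) := by
        rw [map_pow, ← hll, mul_pow, mul_comm]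
        exact hn.mul _
      obtain ⟨m, hm⟩ := Jm.loc δ S' _ h1
      refine ⟨n + m, ?_⟩
      have := hm.mul (δ ^ n * ll x ^ m)
      convert this using 1
      ring
    · exact ⟨1, by rw [pow_one]; exact (hβ x hx).1⟩
  · intro M _ _ hM
    have hMA : ∀ x ∈ A, ∀ m : M, (δ * ll x) • m = 0 := fun x hx m =>
      hM _ (Finset.mem_union_left _ (Finset.mem_image_of_mem _ hx)) m
    have hMB : ∀ x ∈ B₂, ∀ m : M, β x • m = 0 := fun x hx m =>
      hM _ (Finset.mem_union_right _ (Finset.mem_image_of_mem _ hx)) m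
    have hLM : ∀ s : S, (∀ m : M, s • m = 0) → ∀ y : LMx δ M, s • y = 0 := by
      intro s hs y
      obtain ⟨k, m, hm⟩ := jx_surj δ y
      apply xpow_inj δ k
      rw [smul_comm, hm, ← map_smul, hs, map_zero, smul_zero]
    -- torsion modules
    have htors : ∀ (N : Type u) [AddCommGroup N] [Module S N] (d : N →ₗ[S] N), (∀ x, d (d x) = 0) →
        (∀ n : N, ∃ k : ℕ, δ ^ k • n = 0) → (∀ x ∈ B₂, ∀ n : N, β x • n = 0) → P N d := by
      intro N _ _ d hd h1 h2
      refine hP.tors_all ((insert δ (B₂.image lx) : Finset S) : Set S) ?_ (insert δ (B₂.image lx)) N d hd ?_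
      · apply hP.killed_all
        intro K _ _ hK
        have ht := DMtors_span (S := S) (M := K) {δ} (by
          rintro _ rfl m
          exact hK δ (by simp) m)
        letI := ht.module
        have h3 := hB₂' K (fun x hx m => by
          rw [← hlx x, ht.mk_smul]
          exact hK _ (by simp only [Finset.coe_insert, Finset.coe_image]; right; exact ⟨x, hx, rfl⟩) m)
        rw [DMrestr_iff (d := 0)] at h3
        · exact h3
        · intro s x; exact (ht.mk_smul s x).symm
        · intro x; rfl
      · intro x hx
        right
        refine ⟨hx, fun n => ?_⟩
        have hx : x = δ ∨ ∃ y ∈ B₂, lx y = x := by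
          simpa using hx
        rcases hx with rfl | ⟨y, hy, rfl⟩
        · exact h1 n
        · obtain ⟨k, hk⟩ := h1 n
          obtain ⟨_, e, he⟩ := hβ y hy
          replace he : Ideal.Quotient.mk (Ideal.span {δ}) (lx y ^ e) = Ideal.Quotient.mk (Ideal.span {δ}) (β y) := by
            rw [map_pow]; erw [hlx, he]
          rw [Ideal.Quotient.eq, Ideal.mem_span_singleton] at he
          obtain ⟨t, ht⟩ := he
          exact tors_pow δ (β y) _ t e (by linear_combination ht) n (h2 y hy n) k hk
    refine hP.loc_step δ 0 (fun _ => rfl) ?_ ?_ ?_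
    · rw [mapx_zero]
      have h3 : DMrestr al P (LMx δ M) 0 := by
        apply hA'
        intro x hx y
        have h4 := hLM _ (hMA x hx) y
        rw [← algebraMap_smul S', map_mul, ← hll] at h4
        have h5 : x = v ^ (lk x + 1) * (al δ * (x * al δ ^ lk x)) := by
          have : (al δ * v) ^ (lk x + 1) = 1 := by rw [hv, one_pow]
          rw [mul_pow] at this
          linear_combination (-x) * this
        rw [h5, mul_smul, h4, smul_zero]
      rw [DMrestr_iff (d := 0)] at h3
      · exact h3
      · intro s x; exact (algebraMap_smul S' s x).symm
      · intro x; rfl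
    · apply htors
      · intro x; exact Subtype.ext rfl
      · intro n
        obtain ⟨k, hk⟩ := (jx_ker δ n.1).1 n.2
        exact ⟨k, Subtype.ext hk⟩
      · intro x hx n
        exact Subtype.ext (hMB x hx n.1)
    · apply htors
      · exact cokx_sq δ 0 (fun _ => rfl)
      · exact cokx_tors δ
      · intro x hx n
        obtain ⟨y, rfl⟩ := Submodule.mkQ_surjective _ n
        rw [← map_smul, hLM _ (hMB x hx), map_zero]

end main

end PartA6

section B1
variable {R : Type u} [CommRing R]
open HomologicalComplex

lemma cyc_exists (K : CochainComplex (ModuleCat.{u} R) ℤ) (i j : ℤ) (hij : i + 1 = j) (x : K.X i)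
    (hx : K.d i j x = 0) : ∃ z : K.cycles i, K.iCycles i z = x := by
  have h := (ShortComplex.exact_of_f_is_kernel (ShortComplex.mk _ _ (K.iCycles_d i j))
    (K.cyclesIsKernel i j (by simp [← hij])))
  exact (ShortComplex.moduleCat_exact_iff _).1 h x hx

lemma cyc_inj (K : CochainComplex (ModuleCat.{u} R) ℤ) (i : ℤ) :
    Function.Injective (K.iCycles i) :=
  (ModuleCat.mono_iff_injective _).1 inferInstance

lemma hom_surj (K : CochainComplex (ModuleCat.{u} R) ℤ) (i : ℤ) :
    Function.Surjective (K.homologyπ i) :=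
  (ModuleCat.epi_iff_surjective _).1 inferInstance

lemma hom_zero (K : CochainComplex (ModuleCat.{u} R) ℤ) (i j : ℤ) (hij : i + 1 = j) (z : K.cycles j)
    (hz : K.homologyπ j z = 0) : ∃ y : K.X i, K.d i j y = K.iCycles j z := by
  have h := (ShortComplex.exact_of_g_is_cokernel (ShortComplex.mk _ _ (K.toCycles_comp_homologyπ i j))
    (K.homologyIsCokernel i j (by simp [← hij])))
  obtain ⟨y, hy⟩ := (ShortComplex.moduleCat_exact_iff _).1 h z hz
  refine ⟨y, ?_⟩
  rw [← hy]
  change _ = (K.toCycles i j ≫ K.iCycles j) y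
  rw [K.toCycles_i]

lemma hom_zero' (K : CochainComplex (ModuleCat.{u} R) ℤ) (i j : ℤ) (z : K.cycles j)
    (y : K.X i) (hy : K.d i j y = K.iCycles j z) : K.homologyπ j z = 0 := by
  have : z = K.toCycles i j y := by
    apply cyc_inj
    rw [← hy]
    change _ = (K.toCycles i j ≫ K.iCycles j) y
    rw [K.toCycles_i]
  rw [this]
  change (K.toCycles i j ≫ K.homologyπ j) y = 0
  simp

lemma cyc_d (K : CochainComplex (ModuleCat.{u} R) ℤ) (i j : ℤ) (z : K.cycles i) :
    K.d i j (K.iCycles i z) = 0 := by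
  change (K.iCycles i ≫ K.d i j) z = 0
  simp

lemma cyc_map {K L : CochainComplex (ModuleCat.{u} R) ℤ} (f : K ⟶ L) (i : ℤ) (z : K.cycles i) :
    L.iCycles i (cyclesMap f i z) = f.f i (K.iCycles i z) := by
  change (cyclesMap f i ≫ L.iCycles i) z = (K.iCycles i ≫ f.f i) z
  rw [cyclesMap_i]

lemma hom_map {K L : CochainComplex (ModuleCat.{u} R) ℤ} (f : K ⟶ L) (i : ℤ) (z : K.cycles i) :
    homologyMap f i (K.homologyπ i z) = L.homologyπ i (cyclesMap f i z) := by
  change (K.homologyπ i ≫ homologyMap f i) z = (cyclesMap f i ≫ L.homologyπ i) z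
  rw [homologyπ_naturality]

/-- concrete quasi-isomorphism criterion -/
def CQI {K L : CochainComplex (ModuleCat.{u} R) ℤ} (f : K ⟶ L) : Prop :=
  ∀ i j k : ℤ, i + 1 = j → j + 1 = k →
    (∀ x : K.X j, K.d j k x = 0 → ∀ y : L.X i, L.d i j y = f.f j x → ∃ w : K.X i, K.d i j w = x) ∧
    (∀ y : L.X j, L.d j k y = 0 → ∃ (x : K.X j) (w : L.X i), K.d j k x = 0 ∧ y = f.f j x + L.d i j w)

lemma CQI_iff {K L : CochainComplex (ModuleCat.{u} R) ℤ} (f : K ⟶ L) : QuasiIso f ↔ CQI f := by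
  constructor
  · intro h i j k hi hk
    have h1 : IsIso (homologyMap f j) := inferInstance
    have hbij : Function.Bijective (homologyMap f j) := ConcreteCategory.bijective_of_isIso _
    constructor
    · intro x hx y hy
      obtain ⟨z, rfl⟩ := cyc_exists K j k hk x hx
      refine hom_zero K i j hi z (hbij.1 ?_)
      rw [hom_map, map_zero]
      exact hom_zero' L i j _ y (by rw [hy, cyc_map])
    · intro y hy
      obtain ⟨z, rfl⟩ := cyc_exists L j k hk y hy
      obtain ⟨q, hq⟩ := hbij.2 (L.homologyπ j z)
      obtain ⟨t, rfl⟩ := hom_surj K j q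
      rw [hom_map, eq_comm, ← sub_eq_zero, ← map_sub] at hq
      obtain ⟨w, hw⟩ := hom_zero L i j hi _ hq
      refine ⟨K.iCycles j t, w, cyc_d K j k t, ?_⟩
      rw [hw, map_sub, cyc_map]; abel
  · intro h
    rw [quasiIso_iff]
    intro j
    rw [quasiIsoAt_iff_isIso_homologyMap, ConcreteCategory.isIso_iff_bijective]
    obtain ⟨h1, h2⟩ := h (j-1) j (j+1) (by omega) rfl
    constructor
    · rw [injective_iff_map_eq_zero]
      intro q hq
      obtain ⟨t, rfl⟩ := hom_surj K j q
      rw [hom_map] at hq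
      obtain ⟨w, hw⟩ := hom_zero L (j-1) j (by omega) _ hq
      rw [cyc_map] at hw
      obtain ⟨v, hv⟩ := h1 _ (cyc_d K j (j+1) t) w hw
      exact hom_zero' K _ _ _ v hv
    · intro q
      obtain ⟨t, rfl⟩ := hom_surj L j q
      obtain ⟨x, w, hx, hw⟩ := h2 _ (cyc_d L j (j+1) t)
      obtain ⟨z, rfl⟩ := cyc_exists K j (j+1) rfl x hx
      refine ⟨K.homologyπ j z, ?_⟩
      rw [hom_map, eq_comm, ← sub_eq_zero, ← map_sub]
      apply hom_zero' L (j-1) j _ w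
      rw [map_sub, hw, cyc_map]; abel

lemma CQI_of_bij {K L : CochainComplex (ModuleCat.{u} R) ℤ} (f : K ⟶ L)
    (h : ∀ i, Function.Bijective (f.f i)) : CQI f := by
  intro i j k hi hk
  constructor
  · intro x hx y hy
    obtain ⟨w, rfl⟩ := (h i).2 y
    refine ⟨w, (h j).1 ?_⟩
    rw [← hy]
    change (K.d i j ≫ f.f j) w = (f.f i ≫ L.d i j) w
    rw [f.comm]
  · intro y hy
    obtain ⟨x, rfl⟩ := (h j).2 y
    refine ⟨x, 0, (h k).1 ?_, by simp⟩
    rw [map_zero, ← hy]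
    change (K.d j k ≫ f.f k) x = (f.f j ≫ L.d j k) x
    rw [f.comm]

end B1


section B2
open HomologicalComplex DirectSum
variable {R : Type u} [CommRing R] {ι : Type u}

/-- explicit direct sum of complexes -/
noncomputable def dsC (X : ι → CochainComplex (ModuleCat.{u} R) ℤ) :
    CochainComplex (ModuleCat.{u} R) ℤ where
  X i := ModuleCat.of R (⨁ k, (X k).X i)
  d i j := ModuleCat.ofHom (DirectSum.lmap fun k => ((X k).d i j).hom)
  shape i j h := by
    ext1
    refine LinearMap.ext fun x => DFinsupp.ext fun k => ?_
    change ((X k).d i j).hom (x k) = 0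
    rw [(X k).shape i j h]; rfl
  d_comp_d' i j l _ _ := by
    ext1
    refine LinearMap.ext fun x => DFinsupp.ext fun k => ?_
    change ((X k).d j l).hom (((X k).d i j).hom (x k)) = 0
    change ((X k).d i j ≫ (X k).d j l) (x k) = 0
    simp

variable (X : ι → CochainComplex (ModuleCat.{u} R) ℤ)

/-- component of an element of the direct sum -/
noncomputable def dsP (k : ι) (i : ℤ) : (dsC X).X i →ₗ[R] (X k).X i :=
  DirectSum.component R ι (fun k => (X k).X i) k

lemma dsP_d (i j : ℤ) (x : (dsC X).X i) (k : ι) :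
    dsP X k j ((dsC X).d i j x) = (X k).d i j (dsP X k i x) := rfl

variable {X} in
lemma dsP_ext {i : ℤ} {x y : (dsC X).X i} (h : ∀ k, dsP X k i x = dsP X k i y) : x = y :=
  DFinsupp.ext h

lemma dsC_mk (i : ℤ) (F : Finset ι) (v : ∀ k, (X k).X i) (hF : ∀ k, k ∉ F → v k = 0) :
    ∃ x : (dsC X).X i, ∀ k, dsP X k i x = v k := by
  classical
  refine ⟨DFinsupp.mk F (fun k => v k), fun k => ?_⟩
  change (DFinsupp.mk F (fun k => v k) : ⨁ k, (X k).X i) k = v k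
  erw [DFinsupp.mk_apply]
  split_ifs with h
  · rfl
  · exact (hF k h).symm

lemma dsP_fin (i : ℤ) (x : (dsC X).X i) : ∃ F : Finset ι, ∀ k, k ∉ F → dsP X k i x = 0 := by
  classical
  let y : Π₀ k, (X k).X i := x
  refine ⟨y.support, fun k hk => ?_⟩
  exact DFinsupp.notMem_support_iff.1 hk

open Classical in
noncomputable def dsInj (k : ι) : X k ⟶ dsC X where
  f i := ModuleCat.ofHom (DirectSum.lof R ι (fun k => (X k).X i) k)
  comm' i j _ := by
    ext1
    refine LinearMap.ext fun x => DFinsupp.ext fun l => ?_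
    change ((X l).d i j).hom (DirectSum.lof R ι (fun k => (X k).X i) k x l) =
      DirectSum.lof R ι (fun k => (X k).X j) k (((X k).d i j).hom x) l
    by_cases h : k = l
    · subst h; simp [DirectSum.lof_eq_of, DirectSum.of_eq_same]
    · simp only [DirectSum.lof_eq_of]
      rw [DirectSum.of_eq_of_ne _ _ _ (Ne.symm h), DirectSum.of_eq_of_ne _ _ _ (Ne.symm h), map_zero]

open Classical in
lemma dsInj_f (k : ι) (i : ℤ) (x : (X k).X i) :
  (dsInj X k).f i x = DirectSum.lof R ι (fun k => (X k).X i) k x := rfl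

open Classical in
noncomputable def dsDesc {Y : CochainComplex (ModuleCat.{u} R) ℤ} (f : ∀ k, X k ⟶ Y) : dsC X ⟶ Y where
  f i := ModuleCat.ofHom (DirectSum.toModule R ι _ (fun k => ((f k).f i).hom))
  comm' i j _ := by
    ext1
    refine DirectSum.linearMap_ext R fun k => LinearMap.ext fun x => ?_
    have h1 : (dsC X).d i j (DirectSum.lof R ι (fun k => (X k).X i) k x) =
      DirectSum.lof R ι (fun k => (X k).X j) k (((X k).d i j).hom x) := by
      rw [← dsInj_f, ← dsInj_f]
      change ((dsInj X k).f i ≫ (dsC X).d i j) x = _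
      rw [(dsInj X k).comm]; rfl
    change Y.d i j (DirectSum.toModule R ι _ (fun k => ((f k).f i).hom) (DirectSum.lof R ι (fun k => (X k).X i) k x)) =
      DirectSum.toModule R ι _ (fun k => ((f k).f j).hom) ((dsC X).d i j (DirectSum.lof R ι (fun k => (X k).X i) k x))
    rw [h1, DirectSum.toModule_lof, DirectSum.toModule_lof]
    change ((f k).f i ≫ Y.d i j) x = ((X k).d i j ≫ (f k).f j) x
    rw [(f k).comm]

open Classical in
@[simp]
lemma dsInj_desc {Y : CochainComplex (ModuleCat.{u} R) ℤ} (f : ∀ k, X k ⟶ Y) (k : ι) :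
    dsInj X k ≫ dsDesc X f = f k := by
  ext i x
  exact DirectSum.toModule_lof R (φ := fun k => ((f k).f i).hom) k x

variable {X} in
lemma dsC_hom_ext {Y : CochainComplex (ModuleCat.{u} R) ℤ} {f g : dsC X ⟶ Y}
    (h : ∀ k, dsInj X k ≫ f = dsInj X k ≫ g) : f = g := by
  classical
  ext1 i
  ext1
  refine DirectSum.linearMap_ext R fun k => LinearMap.ext fun x => ?_
  have := h k
  exact congrArg (fun t => (t.f i).hom x) this


lemma dsP_inj (k : ι) (i : ℤ) (x : (X k).X i) : dsP X k i ((dsInj X k).f i x) = x := by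
  classical
  change DirectSum.lof R ι (fun k => (X k).X i) k x k = x
  simp [DirectSum.lof_eq_of, DirectSum.of_eq_same]

lemma dsP_inj_ne (k l : ι) (i : ℤ) (x : (X k).X i) (h : l ≠ k) : dsP X l i ((dsInj X k).f i x) = 0 := by
  classical
  change DirectSum.lof R ι (fun k => (X k).X i) k x l = 0
  simp [DirectSum.lof_eq_of, DirectSum.of_eq_of_ne _ _ _ h]

lemma dsC_sum (i : ℤ) (x : (dsC X).X i) (F : Finset ι) (hF : ∀ k, k ∉ F → dsP X k i x = 0) :
    x = ∑ k ∈ F, (dsInj X k).f i (dsP X k i x) := by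
  classical
  refine dsP_ext fun l => ?_
  rw [map_sum]
  by_cases hl : l ∈ F
  · rw [Finset.sum_eq_single l]
    · rw [dsP_inj]
    · intro k _ hk; exact dsP_inj_ne X k l i _ hk.symm
    · intro h; exact absurd hl h
  · rw [hF l hl, Finset.sum_eq_zero]
    intro k hk
    exact dsP_inj_ne X k l i _ (by rintro rfl; exact hl hk)

variable {X} in
/-- functoriality -/
noncomputable def dsMap {Y : ι → CochainComplex (ModuleCat.{u} R) ℤ} (f : ∀ k, X k ⟶ Y k) :
    dsC X ⟶ dsC Y := dsDesc X (fun k => f k ≫ dsInj Y k)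

variable {X} in
lemma dsP_map {Y : ι → CochainComplex (ModuleCat.{u} R) ℤ} (f : ∀ k, X k ⟶ Y k) (k : ι) (i : ℤ)
    (x : (dsC X).X i) : dsP Y k i ((dsMap f).f i x) = (f k).f i (dsP X k i x) := by
  obtain ⟨F, hF⟩ := dsP_fin X i x
  rw [dsC_sum X i x F hF]
  simp only [map_sum]
  refine Finset.sum_congr rfl fun l _ => ?_
  have h : (dsMap f).f i ((dsInj X l).f i (dsP X l i x)) = (dsInj Y l).f i ((f l).f i (dsP X l i x)) := by
    change (dsInj X l ≫ dsMap f).f i _ = (f l ≫ dsInj Y l).f i _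
    rw [dsMap, dsInj_desc]
  rw [h]
  by_cases hl : k = l
  · subst hl; rw [dsP_inj, dsP_inj]
  · rw [dsP_inj_ne _ _ _ _ _ hl, dsP_inj_ne _ _ _ _ _ hl, map_zero]

variable {X} in
lemma dsMap_CQI {Y : ι → CochainComplex (ModuleCat.{u} R) ℤ} (f : ∀ k, X k ⟶ Y k)
    (h : ∀ k, CQI (f k)) : CQI (dsMap f) := by
  classical
  intro i j l hi hl
  constructor
  · intro x hx y hy
    obtain ⟨F, hF⟩ := dsP_fin X j x
    have h1 : ∀ k, ∃ w : (X k).X i, (X k).d i j w = dsP X k j x ∧ (k ∉ F → w = 0) := by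
      intro k
      by_cases hk : k ∈ F
      · obtain ⟨w, hw⟩ := (h k i j l hi hl).1 (dsP X k j x) (by rw [← dsP_d, hx, map_zero])
          (dsP Y k i y) (by rw [← dsP_d, hy, dsP_map])
        exact ⟨w, hw, fun h => absurd hk h⟩
      · exact ⟨0, by rw [hF k hk, map_zero], fun _ => rfl⟩
    choose w hw hw' using h1
    obtain ⟨z, hz⟩ := dsC_mk X i F w hw'
    exact ⟨z, dsP_ext fun k => by rw [dsP_d, hz, hw]⟩
  · intro y hy
    obtain ⟨F, hF⟩ := dsP_fin Y j y
    have h1 : ∀ k, ∃ (x : (X k).X j) (w : (Y k).X i), (X k).d j l x = 0 ∧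
        dsP Y k j y = (f k).f j x + (Y k).d i j w ∧ (k ∉ F → x = 0) ∧ (k ∉ F → w = 0) := by
      intro k
      by_cases hk : k ∈ F
      · obtain ⟨x, w, hx, hw⟩ := (h k i j l hi hl).2 (dsP Y k j y) (by rw [← dsP_d, hy, map_zero])
        exact ⟨x, w, hx, hw, fun h => absurd hk h, fun h => absurd hk h⟩
      · exact ⟨0, 0, map_zero _, by rw [hF k hk, map_zero, map_zero, add_zero], fun _ => rfl, fun _ => rfl⟩
    choose x w hx hw h3 h4 using h1
    obtain ⟨z, hz⟩ := dsC_mk X j F x h3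
    obtain ⟨t, ht⟩ := dsC_mk Y i F w h4
    exact ⟨z, t, dsP_ext fun k => by rw [dsP_d, hz, hx, map_zero],
      dsP_ext fun k => by rw [map_add, dsP_map, dsP_d, hz, ht, hw]⟩

lemma dsC_homology_ext (i : ℤ) {A : ModuleCat.{u} R} (g g' : (dsC X).homology i ⟶ A)
    (h : ∀ k, homologyMap (dsInj X k) i ≫ g = homologyMap (dsInj X k) i ≫ g') : g = g' := by
  ext q
  obtain ⟨z, rfl⟩ := hom_surj _ _ q
  obtain ⟨F, hF⟩ := dsP_fin X i ((dsC X).iCycles i z)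
  have h1 : ∀ k, ∃ t : (X k).cycles i, (X k).iCycles i t = dsP X k i ((dsC X).iCycles i z) := fun k =>
    cyc_exists (X k) i (i+1) rfl _ (by rw [← dsP_d, cyc_d, map_zero])
  choose t ht using h1
  have h2 : z = ∑ k ∈ F, cyclesMap (dsInj X k) i (t k) := by
    apply cyc_inj
    rw [map_sum]
    simp only [cyc_map, ht]
    exact dsC_sum X i _ F hF
  rw [h2]
  simp only [map_sum]
  refine Finset.sum_congr rfl fun k _ => ?_
  rw [← hom_map]
  exact congrArg (fun f => f.hom ((X k).homologyπ i (t k))) (h k)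

variable [HasDerivedCategory.{w'} (ModuleCat.{u} R)]
open DerivedCategory

lemma dsQ_exists (Y : DerivedCategory (ModuleCat.{u} R)) (f : ∀ k, Q.obj (X k) ⟶ Y) :
    ∃ g : Q.obj (dsC X) ⟶ Y, ∀ k, Q.map (dsInj X k) ≫ g = f k := by
  let e := Q.objObjPreimageIso Y
  have h1 := fun k => right_fac (f k ≫ e.inv)
  choose X' s hs g hg using h1
  have h2 : IsIso (Q.map (dsMap s)) := by
    rw [isIso_Q_map_iff_quasiIso, CQI_iff]
    apply dsMap_CQI
    intro k
    rw [← CQI_iff, ← isIso_Q_map_iff_quasiIso]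
    exact hs k
  refine ⟨inv (Q.map (dsMap s)) ≫ Q.map (dsDesc X' g) ≫ e.hom, fun k => ?_⟩
  have h3 : Q.map (dsInj X k) ≫ inv (Q.map (dsMap s)) = inv (Q.map (s k)) ≫ Q.map (dsInj X' k) := by
    rw [IsIso.comp_inv_eq, Category.assoc, IsIso.eq_inv_comp, ← Q.map_comp, ← Q.map_comp, dsMap, dsInj_desc]
  rw [← Category.assoc, h3, Category.assoc, ← Category.assoc (Q.map (dsInj X' k)), ← Q.map_comp, dsInj_desc,
    ← Category.assoc, ← hg, Category.assoc, e.inv_hom_id, Category.comp_id]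

lemma dsQ_zero (Y : DerivedCategory (ModuleCat.{u} R)) (f : Q.obj (dsC X) ⟶ Y)
    (h : ∀ k, Q.map (dsInj X k) ≫ f = 0) : f = 0 := by
  obtain ⟨W, a, b, hT⟩ := distinguished_cocone_triangle₁ f
  have h1 := fun k => Triangle.coyoneda_exact₂ _ hT (Q.map (dsInj X k)) (h k)
  choose l hl using h1
  obtain ⟨m, hm⟩ := dsQ_exists X W l
  have h2 : ∀ k, Q.map (dsInj X k) ≫ m ≫ a = Q.map (dsInj X k) := by
    intro k
    rw [← Category.assoc, hm]
    exact (hl k).symm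
  have h3 : IsIso (m ≫ a) := by
    rw [DerivedCategory.isIso_iff]
    intro n
    have h4 : (DerivedCategory.homologyFunctor _ n).map (m ≫ a) = 𝟙 _ := by
      rw [← cancel_epi ((homologyFunctorFactors _ n).inv.app (dsC X))]
      apply dsC_homology_ext
      intro k
      have h5 := (homologyFunctorFactors (ModuleCat.{u} R) n).inv.naturality (dsInj X k)
      have h6 : (DerivedCategory.homologyFunctor (ModuleCat.{u} R) n).map (Q.map (dsInj X k)) ≫
          (DerivedCategory.homologyFunctor _ n).map (m ≫ a) =
          (DerivedCategory.homologyFunctor (ModuleCat.{u} R) n).map (Q.map (dsInj X k)) ≫ 𝟙 _ := by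
        rw [← Functor.map_comp, h2, Category.comp_id]
      exact ((reassoc_of% h5) _).trans ((congrArg (_ ≫ ·) h6).trans ((reassoc_of% h5) _).symm)
    rw [h4]; infer_instance
  rw [← cancel_epi (m ≫ a), comp_zero, Category.assoc, show a ≫ f = 0 from comp_distTriang_mor_zero₁₂ _ hT,
    comp_zero]

lemma dsQ_colim : Nonempty (IsColimit (Cofan.mk (f := fun k => Q.obj (X k)) (Q.obj (dsC X))
    (fun k => Q.map (dsInj X k)))) := by
  refine ⟨Cofan.IsColimit.mk _ (fun c => (dsQ_exists X c.pt c.inj).choose) 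
    (fun c k => (dsQ_exists X c.pt c.inj).choose_spec k) (fun c m hm => ?_)⟩
  rw [← sub_eq_zero]
  apply dsQ_zero
  intro k
  rw [Preadditive.comp_sub, (dsQ_exists X c.pt c.inj).choose_spec k, sub_eq_zero]
  exact hm k

end B2


section B3
variable {T : Type u} [Category.{v} T] [Preadditive T] [HasZeroObject T]
  [HasShift T ℤ] [∀ n : ℤ, (shiftFunctor T n).Additive] [Pretriangulated T]

lemma IsLocalizingSub.ext₁ {L : Set T} (hL : IsLocalizingSub.{w} L) (Tr : Triangle T)
    (h : Tr ∈ distinguishedTriangles) (h2 : Tr.obj₂ ∈ L) (h3 : Tr.obj₃ ∈ L) : Tr.obj₁ ∈ L := by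
  have h4 := hL.cone_mem _ (rot_of_distTriang _ h) h2 h3
  have h5 := hL.shift_mem (-1) h4
  exact hL.mem_of_iso ((shiftEquiv T (1:ℤ)).unitIso.app Tr.obj₁).symm h5

lemma IsLocalizingSub.ext₂ {L : Set T} (hL : IsLocalizingSub.{w} L) (Tr : Triangle T)
    (h : Tr ∈ distinguishedTriangles) (h1 : Tr.obj₁ ∈ L) (h3 : Tr.obj₃ ∈ L) : Tr.obj₂ ∈ L :=
  hL.ext₁ _ (rot_of_distTriang _ h) h3 (hL.shift_mem 1 h1)

lemma IsLocalizingSub.retract_aux {L : Set T} (hL : IsLocalizingSub.{w} L) (C K : T)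
    (s : C ⟶ K) (r : K ⟶ C) (hsr : s ≫ r = 𝟙 C) (hK : K ∈ L)
    (c : Cofan (fun _ : ULift.{w} ℕ => K)) (hc : IsColimit c) : C ∈ L := by
  have hA : c.pt ∈ L := hL.coprod_mem _ c hc (fun _ => hK)
  let z : ℕ → (K ⟶ c.pt) := fun n => c.inj ⟨n⟩
  let e : K ⟶ K := r ≫ s
  have hee : e ≫ e = e := by simp [e, reassoc_of% hsr]
  have hse : s ≫ e = s := by simp [e, reassoc_of% hsr]
  let v : ℕ → (K ⟶ C ⊞ c.pt) := fun n => Nat.casesOn n (r ≫ biprod.inl + (𝟙 K - e) ≫ z 0 ≫ biprod.inr)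
    (fun n => e ≫ z n ≫ biprod.inr + (𝟙 K - e) ≫ z (n+1) ≫ biprod.inr)
  have hv0 : v 0 = r ≫ biprod.inl + (𝟙 K - e) ≫ z 0 ≫ biprod.inr := rfl
  have hv1 : ∀ n, v (n+1) = e ≫ z n ≫ biprod.inr + (𝟙 K - e) ≫ z (n+1) ≫ biprod.inr := fun n => rfl
  have hz : ∀ {Y : T} (g : ℕ → (K ⟶ Y)) (n : ℕ), z n ≫ Cofan.IsColimit.desc hc (fun i => g i.down) = g n := by
    intro Y g n
    exact Cofan.IsColimit.fac hc _ _
  have key : (C ⊞ c.pt) ∈ L := by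
    refine hL.coprod_mem (fun _ : ULift.{w} ℕ => K) (Cofan.mk (C ⊞ c.pt) (fun n => v n.down)) ?_ (fun _ => hK)
    refine Cofan.IsColimit.mk _ (fun t => biprod.desc (s ≫ t.inj ⟨0⟩) (Cofan.IsColimit.desc hc
      (fun i => e ≫ t.inj ⟨i.down+1⟩ + (𝟙 K - e) ≫ t.inj ⟨i.down⟩))) ?_ ?_
    · rintro t ⟨n⟩
      have hz' := hz (fun i => e ≫ t.inj ⟨i+1⟩ + (𝟙 K - e) ≫ t.inj ⟨i⟩)
      change v n ≫ _ = _
      cases n with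
      | zero =>
        rw [hv0]
        simp only [Preadditive.add_comp, Category.assoc, biprod.inl_desc, biprod.inr_desc, hz']
        simp [Preadditive.comp_add, Preadditive.sub_comp, Preadditive.comp_sub, reassoc_of% hee, e, reassoc_of% hsr]
      | succ n =>
        rw [hv1]
        simp only [Preadditive.add_comp, Category.assoc, biprod.inl_desc, biprod.inr_desc, hz']
        simp [Preadditive.comp_add, Preadditive.sub_comp, Preadditive.comp_sub, e, reassoc_of% hsr]
    · intro t m hm
      have h0 : v 0 ≫ m = t.inj ⟨0⟩ := hm ⟨0⟩
      have h1 : ∀ n, v n ≫ m = t.inj ⟨n⟩ := fun n => hm ⟨n⟩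
      apply biprod.hom_ext'
      · rw [biprod.inl_desc, ← h0, hv0]
        simp [Preadditive.sub_comp, Preadditive.comp_sub, reassoc_of% hsr, reassoc_of% hse]
      · rw [biprod.inr_desc]
        apply Cofan.IsColimit.hom_ext hc
        rintro ⟨n⟩
        rw [Cofan.IsColimit.fac]
        change z n ≫ _ = e ≫ t.inj ⟨n+1⟩ + (𝟙 K - e) ≫ t.inj ⟨n⟩
        rw [← h1, ← h1, hv1]
        cases n with
        | zero =>
          rw [hv0]
          simp [Preadditive.sub_comp, Preadditive.comp_sub, Preadditive.comp_add, reassoc_of% hsr, reassoc_of% hse, e]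
        | succ n =>
          rw [hv1]
          simp [Preadditive.sub_comp, Preadditive.comp_sub, Preadditive.comp_add, reassoc_of% hsr, reassoc_of% hse, e]
  exact hL.ext₁ _ (binaryBiproductTriangle_distinguished C c.pt) key hA

end B3

section B3b
variable {R : Type u} [CommRing R] [HasDerivedCategory.{w'} (ModuleCat.{u} R)] {ι : Type u}
open DerivedCategory

lemma exists_cofan (f : ι → DerivedCategory (ModuleCat.{u} R)) :
    ∃ (X : ι → CochainComplex (ModuleCat.{u} R) ℤ) (e : ∀ k, f k ≅ Q.obj (X k)),
      Nonempty (IsColimit (Cofan.mk (Q.obj (dsC X)) (fun k => (e k).hom ≫ Q.map (dsInj X k)))) := by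
  let X := fun k => Q.objPreimage (f k)
  let e : ∀ k, f k ≅ Q.obj (X k) := fun k => (Q.objObjPreimageIso (f k)).symm
  obtain ⟨h⟩ := dsQ_colim X
  refine ⟨X, e, ⟨Cofan.IsColimit.mk _ (fun t => Cofan.IsColimit.desc h (fun k => (e k).inv ≫ t.inj k)) ?_ ?_⟩⟩
  · intro t k
    have := Cofan.IsColimit.fac h (fun k => (e k).inv ≫ t.inj k) k
    change ((e k).hom ≫ Q.map (dsInj X k)) ≫ _ = _
    change Q.map (dsInj X k) ≫ _ = _ at this
    rw [Category.assoc, this, Iso.hom_inv_id_assoc]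
  · intro t m hm
    apply Cofan.IsColimit.hom_ext h
    intro k
    rw [Cofan.IsColimit.fac, Iso.eq_inv_comp, ← hm k]
    exact (Category.assoc _ _ _).symm

lemma IsLocalizingSub.retract {L : Set (DerivedCategory (ModuleCat.{u} R))} (hL : IsLocalizingSub.{u} L)
    {C K : DerivedCategory (ModuleCat.{u} R)}
    (s : C ⟶ K) (r : K ⟶ C) (hsr : s ≫ r = 𝟙 C) (hK : K ∈ L) : C ∈ L := by
  obtain ⟨X, e, ⟨h⟩⟩ := exists_cofan (fun _ : ULift.{u} ℕ => K)
  exact hL.retract_aux C K s r hsr hK _ h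

lemma IsLocalizingSub.ds {L : Set (DerivedCategory (ModuleCat.{u} R))} (hL : IsLocalizingSub.{u} L)
    (X : ι → CochainComplex (ModuleCat.{u} R) ℤ) (h : ∀ k, Q.obj (X k) ∈ L) : Q.obj (dsC X) ∈ L :=
  hL.coprod_mem _ _ (dsQ_colim X).some h

lemma Loc_isLocalizing (S : Set (DerivedCategory (ModuleCat.{u} R))) : IsLocalizingSub.{u} (Loc.{u} S) where
  zero_mem := fun L hL => hL.1.zero_mem
  mem_of_iso := fun e h L hL => hL.1.mem_of_iso e (h L hL)
  shift_mem := fun n _ h L hL => hL.1.shift_mem n (h L hL)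
  cone_mem := fun T hT h1 h2 L hL => hL.1.cone_mem T hT (h1 L hL) (h2 L hL)
  coprod_mem := fun f c hc h L hL => hL.1.coprod_mem f c hc (fun i => h i L hL)

lemma Loc_subset {S L : Set (DerivedCategory (ModuleCat.{u} R))} (hL : IsLocalizingSub.{u} L) (h : S ⊆ L) :
    Loc.{u} S ⊆ L := fun _ hx => hx L ⟨hL, h⟩

lemma subset_Loc (S : Set (DerivedCategory (ModuleCat.{u} R))) : S ⊆ Loc.{u} S := fun _ hx _ hL => hL.2 hx
end B3b


section B4
variable {R : Type u} [CommRing R] 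
open HomologicalComplex DerivedCategory DirectSum

/-- the periodic complex of a differential module -/
noncomputable def Per {M : Type u} [AddCommGroup M] [Module R M] (d : M →ₗ[R] M)
    (hd : ∀ x, d (d x) = 0) : CochainComplex (ModuleCat.{u} R) ℤ where
  X _ := ModuleCat.of R M
  d i j := if i + 1 = j then ModuleCat.ofHom d else 0
  shape i j h := if_neg h
  d_comp_d' i j k hi hk := by
    rw [if_pos (show i + 1 = j from hi), if_pos (show j + 1 = k from hk)]
    ext x
    exact hd x

section
variable {M N : Type u} [AddCommGroup M] [Module R M] [AddCommGroup N] [Module R N]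
  {d : M →ₗ[R] M} {d' : N →ₗ[R] N}

lemma Per_d (hd : ∀ x, d (d x) = 0) (i j : ℤ) (h : i + 1 = j) : (Per d hd).d i j = ModuleCat.ofHom d :=
  if_pos h

lemma Per_d_apply (hd : ∀ x, d (d x) = 0) (i j : ℤ) (h : i + 1 = j) (x : M) :
    (Per d hd).d i j x = d x := by rw [Per_d hd i j h]; rfl

/-- maps of periodic complexes -/
noncomputable def PerMap (hd : ∀ x, d (d x) = 0) (hd' : ∀ x, d' (d' x) = 0) (f : M →ₗ[R] N)
    (hf : ∀ x, f (d x) = d' (f x)) : Per d hd ⟶ Per d' hd' where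
  f _ := ModuleCat.ofHom f
  comm' i j h := by
    rw [Per_d _ _ _ h, Per_d _ _ _ h]
    ext x
    exact (hf x).symm

lemma PerMap_f (hd : ∀ x, d (d x) = 0) (hd' : ∀ x, d' (d' x) = 0) (f : M →ₗ[R] N)
    (hf : ∀ x, f (d x) = d' (f x)) (i : ℤ) : (PerMap hd hd' f hf).f i = ModuleCat.ofHom f := rfl
end

variable [HasDerivedCategory.{w'} (ModuleCat.{u} R)]

/-- the class of differential modules attached to a set of objects -/
def DP (L : Set (DerivedCategory (ModuleCat.{u} R))) : DMPred R :=
  fun _ _ _ d => ∃ h : ∀ x, d (d x) = 0, Q.obj (Per d h) ∈ L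

lemma isZero_of_acyclic (K : CochainComplex (ModuleCat.{u} R) ℤ)
    (h : ∀ i j k : ℤ, i + 1 = j → j + 1 = k → ∀ x : K.X j, K.d j k x = 0 → ∃ y : K.X i, K.d i j y = x) :
    IsZero (Q.obj K) := by
  have h1 : CQI (0 : K ⟶ K) := by
    intro i j k hi hk
    refine ⟨fun x hx _ _ => h i j k hi hk x hx, fun y hy => ?_⟩
    obtain ⟨w, hw⟩ := h i j k hi hk y hy
    exact ⟨0, w, map_zero _, by rw [hw, map_zero, zero_add]⟩
  rw [← CQI_iff, ← isIso_Q_map_iff_quasiIso] at h1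
  rw [Q.map_zero] at h1
  exact (isIsoZeroEquivIsoZero _ _ h1).1.isZero_iff.2 (isZero_zero _)

variable {L : Set (DerivedCategory (ModuleCat.{u} R))} (hL : IsLocalizingSub.{u} L)
include hL

lemma IsLocalizingSub.isZero {X : DerivedCategory (ModuleCat.{u} R)} (h : IsZero X) : X ∈ L :=
  hL.mem_of_iso h.isoZero.symm hL.zero_mem

lemma IsLocalizingSub.qiso {K K' : CochainComplex (ModuleCat.{u} R) ℤ} (f : K ⟶ K')
    (hf : CQI f) : Q.obj K ∈ L ↔ Q.obj K' ∈ L := by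
  rw [← CQI_iff, ← isIso_Q_map_iff_quasiIso] at hf
  exact ⟨hL.mem_of_iso (asIso (Q.map f)), hL.mem_of_iso (asIso (Q.map f)).symm⟩

omit hL in
lemma DP_ses {M₁ M₂ M₃ : Type u} [AddCommGroup M₁] [AddCommGroup M₂]
    [AddCommGroup M₃] [Module R M₁] [Module R M₂] [Module R M₃]
    (d₁ : M₁ →ₗ[R] M₁) (d₂ : M₂ →ₗ[R] M₂) (d₃ : M₃ →ₗ[R] M₃) (h : DMIsSES d₁ d₂ d₃) :
    ∃ (h₁ : ∀ x, d₁ (d₁ x) = 0) (h₂ : ∀ x, d₂ (d₂ x) = 0) (h₃ : ∀ x, d₃ (d₃ x) = 0)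
      (T : Triangle (DerivedCategory (ModuleCat.{u} R))), T ∈ distinguishedTriangles ∧
      T.obj₁ = Q.obj (Per d₁ h₁) ∧ T.obj₂ = Q.obj (Per d₂ h₂) ∧ T.obj₃ = Q.obj (Per d₃ h₃) := by
  obtain ⟨h₂, f, g, hf, hg, hfi, hgs, hex⟩ := h
  have h₁ : ∀ x, d₁ (d₁ x) = 0 := fun x => hfi (by rw [hf, hf, h₂, map_zero])
  have h₃ : ∀ x, d₃ (d₃ x) = 0 := fun x => by
    obtain ⟨x, rfl⟩ := hgs x
    rw [← hg, ← hg, h₂, map_zero]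
  let S : ShortComplex (CochainComplex (ModuleCat.{u} R) ℤ) :=
    ShortComplex.mk (PerMap h₁ h₂ f hf) (PerMap h₂ h₃ g hg) (by
      ext i x
      exact (hex (f x)).2 ⟨x, rfl⟩)
  have hS : S.ShortExact := by
    apply shortExact_of_degreewise_shortExact
    intro i
    refine ShortComplex.ShortExact.mk' ?_ ?_ ?_
    · rw [ShortComplex.moduleCat_exact_iff]
      intro x hx
      exact (hex x).1 hx
    · exact (ModuleCat.mono_iff_injective _).2 hfi
    · exact (ModuleCat.epi_iff_surjective _).2 hgs
  exact ⟨h₁, h₂, h₃, _, triangleOfSES_distinguished hS, rfl, rfl, rfl⟩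

lemma DP_class : DMClass (DP L) where
  sq M _ _ d h := h.1
  acyclic M _ _ d hd h := ⟨hd, hL.isZero (isZero_of_acyclic _ (fun i j k hi hk x hx => by
    rw [Per_d _ _ _ hk] at hx
    rw [Per_d _ _ _ hi]
    exact h x hx))⟩
  ses₁ M₁ M₂ M₃ _ _ _ _ _ _ d₁ d₂ d₃ h h2 h3 := by
    obtain ⟨h₁, h₂, h₃, T, hT, e1, e2, e3⟩ := DP_ses d₁ d₂ d₃ h
    exact ⟨h₁, e1 ▸ hL.ext₁ T hT (e2 ▸ h2.2) (e3 ▸ h3.2)⟩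
  ses₂ M₁ M₂ M₃ _ _ _ _ _ _ d₁ d₂ d₃ h h2 h3 := by
    obtain ⟨h₁, h₂, h₃, T, hT, e1, e2, e3⟩ := DP_ses d₁ d₂ d₃ h
    exact ⟨h₂, e2 ▸ hL.ext₂ T hT (e1 ▸ h2.2) (e3 ▸ h3.2)⟩
  ses₃ M₁ M₂ M₃ _ _ _ _ _ _ d₁ d₂ d₃ h h2 h3 := by
    obtain ⟨h₁, h₂, h₃, T, hT, e1, e2, e3⟩ := DP_ses d₁ d₂ d₃ h
    exact ⟨h₃, e3 ▸ hL.cone_mem T hT (e1 ▸ h2.2) (e2 ▸ h3.2)⟩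
  dsum ι M _ _ d h := by
    choose h1 h2 using h
    have h3 : ∀ x, DirectSum.lmap d (DirectSum.lmap d x) = 0 := fun x => DFinsupp.ext fun k => h1 k (x k)
    refine ⟨h3, ?_⟩
    let φ : dsC (fun k => Per (d k) (h1 k)) ⟶ Per (DirectSum.lmap d) h3 :=
      { f := fun i => ModuleCat.ofHom LinearMap.id
        comm' := by
          intro i j hij
          rw [Per_d _ _ _ hij]
          ext1
          refine LinearMap.ext fun x => DFinsupp.ext fun k => ?_
          change d k (DirectSum.component R ι M k x) =
            ((Per (d k) (h1 k)).d i j).hom (DirectSum.component R ι M k x)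
          rw [Per_d _ _ _ hij]; rfl }
    exact (hL.qiso φ (CQI_of_bij φ fun i => Function.bijective_id)).1 (hL.ds _ h2)

end B4


section B5
variable {R : Type u} [CommRing R] 
open HomologicalComplex DerivedCategory DirectSum

variable (X : CochainComplex (ModuleCat.{u} R) ℤ)

/-- total differential -/
noncomputable def fd : (⨁ n : ℤ, X.X n) →ₗ[R] (⨁ n : ℤ, X.X n) :=
  DirectSum.toModule R ℤ _ (fun k => DirectSum.lof R ℤ (fun n => X.X n) (k+1) ∘ₗ (X.d k (k+1)).hom)

lemma fd_lof (k j : ℤ) (h : k + 1 = j) (x : X.X k) :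
    fd X (DirectSum.lof R ℤ (fun n => X.X n) k x) = DirectSum.lof R ℤ (fun n => X.X n) j (X.d k j x) := by
  subst h
  rw [fd, DirectSum.toModule_lof]; rfl

lemma fd_sq (x : ⨁ n : ℤ, X.X n) : fd X (fd X x) = 0 := by
  have : fd X ∘ₗ fd X = 0 := by
    refine DirectSum.linearMap_ext R fun k => LinearMap.ext fun x => ?_
    change fd X (fd X (DirectSum.lof R ℤ (fun n => X.X n) k x)) = 0
    rw [fd_lof X k _ rfl, fd_lof X _ _ rfl]
    have : X.d (k+1) (k+1+1) (X.d k (k+1) x) = 0 := by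
      change (X.d k (k+1) ≫ X.d (k+1) (k+1+1)) x = 0
      simp
    rw [this, map_zero]
  exact LinearMap.congr_fun this x

lemma fd_apply (i j : ℤ) (h : i + 1 = j) (x : ⨁ n : ℤ, X.X n) : (fd X x) j = X.d i j (x i) := by
  have : DirectSum.component R ℤ (fun n => X.X n) j ∘ₗ fd X =
      (X.d i j).hom ∘ₗ DirectSum.component R ℤ (fun n => X.X n) i := by
    refine DirectSum.linearMap_ext R fun k => LinearMap.ext fun x => ?_
    change fd X (DirectSum.lof R ℤ (fun n => X.X n) k x) j = X.d i j (DirectSum.lof R ℤ (fun n => X.X n) k x i)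
    rw [fd_lof X k _ rfl]
    simp only [DirectSum.lof_eq_of]
    by_cases hk : k = i
    · subst hk; subst h
      rw [DirectSum.of_eq_same, DirectSum.of_eq_same]
    · rw [DirectSum.of_eq_of_ne _ _ _ (Ne.symm hk), DirectSum.of_eq_of_ne _ _ _ (by omega), map_zero]
  exact LinearMap.congr_fun this x

/-- inclusion -/
noncomputable def foldIn : X ⟶ Per (fd X) (fd_sq X) where
  f i := ModuleCat.ofHom (DirectSum.lof R ℤ (fun n => X.X n) i)
  comm' i j h := by
    rw [Per_d _ _ _ h]
    ext x
    exact fd_lof X i j h x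

/-- projection -/
noncomputable def foldOut : Per (fd X) (fd_sq X) ⟶ X where
  f i := ModuleCat.ofHom (DirectSum.component R ℤ (fun n => X.X n) i)
  comm' i j h := by
    rw [Per_d _ _ _ h]
    ext1
    exact LinearMap.ext fun x => (fd_apply X i j h x).symm

lemma foldIn_out : foldIn X ≫ foldOut X = 𝟙 X := by
  ext i x
  exact DirectSum.component.lof_self R (M := fun n => X.X n) i x

/-- injections of shifts -/
noncomputable def foldSh (n : ℤ) : X⟦n⟧ ⟶ Per (fd X) (fd_sq X) where
  f i := ModuleCat.ofHom ((n * i).negOnePow • DirectSum.lof R ℤ (fun n => X.X n) (i + n))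
  comm' i j h := by
    rw [Per_d _ _ _ h]
    replace h : i + 1 = j := h
    subst h
    ext x
    revert x
    intro (x : X.X (i + n))
    change fd X ((n * i).negOnePow • DirectSum.lof R ℤ (fun n => X.X n) (i + n) x) = 
      (n * (i+1)).negOnePow • DirectSum.lof R ℤ (fun n => X.X n) (i + 1 + n)
        (n.negOnePow • X.d (i+n) (i+1+n) x)
    rw [Units.smul_def, Units.smul_def, Units.smul_def, map_zsmul, map_zsmul,
      fd_lof X (i+n) (i+1+n) (by omega), smul_smul, mul_add, mul_one, Int.negOnePow_add,
      ← Units.val_mul, mul_assoc, Int.units_mul_self]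
    simp

noncomputable def foldShD : dsC (fun n : ULift.{u} ℤ => X⟦n.down⟧) ⟶ Per (fd X) (fd_sq X) :=
  dsDesc _ (fun n => foldSh X n.down)

lemma foldShD_apply (i : ℤ) (n : ULift.{u} ℤ) (x : (dsC (fun n : ULift.{u} ℤ => X⟦n.down⟧)).X i) :
    DirectSum.component R ℤ (fun n => X.X n) (i + n.down) ((foldShD X).f i x) =
      (n.down * i).negOnePow • (dsP (fun n : ULift.{u} ℤ => X⟦n.down⟧) n i x : X.X (i + n.down)) := by
  obtain ⟨F, hF⟩ := dsP_fin _ i x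
  have hx := dsC_sum _ i x F hF
  let f1 : (dsC (fun n : ULift.{u} ℤ => X⟦n.down⟧)).X i →ₗ[R] X.X (i + n.down) :=
    DirectSum.component R ℤ (fun n => X.X n) (i + n.down) ∘ₗ ((foldShD X).f i).hom
  let f2 : (dsC (fun n : ULift.{u} ℤ => X⟦n.down⟧)).X i →ₗ[R] X.X (i + n.down) :=
    (n.down * i).negOnePow • dsP (fun n : ULift.{u} ℤ => X⟦n.down⟧) n i
  change f1 x = f2 x
  rw [hx, map_sum, map_sum]
  refine Finset.sum_congr rfl fun m _ => ?_
  generalize dsP (fun n : ULift.{u} ℤ => X⟦n.down⟧) m i x = y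
  have h1 : (foldShD X).f i ((dsInj (fun n : ULift.{u} ℤ => X⟦n.down⟧) m).f i y) = (foldSh X m.down).f i y := by
    change (dsInj (fun n : ULift.{u} ℤ => X⟦n.down⟧) m ≫ foldShD X).f i y = _
    rw [foldShD, dsInj_desc]
  have h2 : ∀ y : X.X (i + m.down), m = n → 
    DirectSum.component R ℤ (fun n => X.X n) (i + n.down)
    ((m.down * i).negOnePow • DirectSum.lof R ℤ (fun n => X.X n) (i + m.down) y) =
    (m.down * i).negOnePow • DirectSum.component R ℤ (fun n => X.X n) (i + n.down)
     (DirectSum.lof R ℤ (fun n => X.X n) (i + m.down) y) := by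
    intro y h
    rw [Units.smul_def, map_zsmul, Units.smul_def]
  have h3 : ∀ y : X.X (i + m.down), n ≠ m → 
    DirectSum.component R ℤ (fun n => X.X n) (i + n.down)
    ((m.down * i).negOnePow • DirectSum.lof R ℤ (fun n => X.X n) (i + m.down) y) = 0 := by
    intro y h
    rw [Units.smul_def, map_zsmul, DirectSum.component.of, dif_neg, smul_zero]
    intro h'
    exact h (ULift.ext _ _ (by omega))
  refine (congrArg (DirectSum.component R ℤ (fun n => X.X n) (i + n.down)) h1).trans ?_
  by_cases h : n = m
  · subst h
    refine (h2 y rfl).trans ?_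
    refine congrArg ((n.down * i).negOnePow • ·) ?_
    refine (DirectSum.component.lof_self R (M := fun n => X.X n) _ _).trans ?_
    exact (dsP_inj (fun n : ULift.{u} ℤ => X⟦n.down⟧) n i y).symm
  · refine (h3 y h).trans ?_
    have h4 := dsP_inj_ne (fun n : ULift.{u} ℤ => X⟦n.down⟧) m n i y h
    exact ((congrArg ((n.down * i).negOnePow • ·) h4).trans (smul_zero _)).symm

lemma foldShD_bij (i : ℤ) : Function.Bijective ((foldShD X).f i) := by
  constructor
  · rw [injective_iff_map_eq_zero]
    intro x hx
    refine dsP_ext fun n => ?_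
    have := foldShD_apply X i n x
    rw [hx] at this
    replace this := this.symm
    have h2 : (n.down * i).negOnePow • (dsP (fun n : ULift.{u} ℤ => X⟦n.down⟧) n i x : X.X (i + n.down)) = 0 :=
      this.trans (map_zero _)
    rw [smul_eq_zero_iff_eq] at h2
    rw [map_zero]
    exact h2
  · intro y
    change ∃ x, (foldShD X).f i x = (show (⨁ n, X.X n) from y)
    generalize (show (⨁ n, X.X n) from y) = y
    induction y using DirectSum.induction_on with
    | zero => exact ⟨0, map_zero _⟩
    | add a b ha hb =>
      obtain ⟨a', rfl⟩ := ha
      obtain ⟨b', rfl⟩ := hb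
      exact ⟨a' + b', map_add _ _ _⟩
    | of k x =>
      obtain ⟨n, rfl⟩ : ∃ n, k = i + n := ⟨k - i, by omega⟩
      let y : (X⟦n⟧).X i := (n * i).negOnePow • x
      refine ⟨(dsInj (fun n : ULift.{u} ℤ => X⟦n.down⟧) ⟨n⟩).f i y, ?_⟩
      change (dsInj (fun n : ULift.{u} ℤ => X⟦n.down⟧) ⟨n⟩ ≫ foldShD X).f i y = _
      rw [foldShD, dsInj_desc]
      change ((n * i).negOnePow • DirectSum.lof R ℤ (fun n => X.X n) (i + n) ((n * i).negOnePow • x)) = _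
      rw [Units.smul_def, Units.smul_def, map_zsmul, smul_smul, ← Units.val_mul, Int.units_mul_self]
      simp [DirectSum.lof_eq_of]

variable [HasDerivedCategory.{w'} (ModuleCat.{u} R)]
variable {L : Set (DerivedCategory (ModuleCat.{u} R))} (hL : IsLocalizingSub.{u} L)
include hL

lemma fold_mem_iff : DP L (⨁ n : ℤ, X.X n) (fd X) ↔ Q.obj X ∈ L := by
  constructor
  · rintro ⟨h, h2⟩
    refine hL.retract (Q.map (foldIn X)) (Q.map (foldOut X)) ?_ h2
    rw [← Q.map_comp, foldIn_out, Q.map_id]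
  · intro h
    refine ⟨fd_sq X, (hL.qiso (foldShD X) (CQI_of_bij _ (foldShD_bij X))).1 (hL.ds _ fun n => ?_)⟩
    exact hL.mem_of_iso ((Q.commShiftIso n.down).app X).symm (hL.shift_mem _ h)

lemma smod_mem_iff (M : Type u) [AddCommGroup M] [Module R M] :
    smod R (ModuleCat.of R M) ∈ L ↔ DP L M 0 := by
  let Y : CochainComplex (ModuleCat.{u} R) ℤ := (single (ModuleCat.{u} R) (ComplexShape.up ℤ) 0).obj (ModuleCat.of R M)
  let e : smod R (ModuleCat.of R M) ≅ Q.obj Y := (singleFunctorIsoCompQ (ModuleCat.{u} R) 0).app _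
  let e0 : Y.X 0 ≅ ModuleCat.of R M := singleObjXSelf _ 0 _
  let s : Y ⟶ Per (0 : M →ₗ[R] M) (fun _ => rfl) := mkHomFromSingle (𝟙 _) (fun k hk => by
    rw [Per_d _ _ _ hk]; rfl)
  let r : Per (0 : M →ₗ[R] M) (fun _ => rfl) ⟶ Y := mkHomToSingle (𝟙 _) (fun k hk => by
    rw [Per_d _ _ _ hk]; rfl)
  constructor
  · intro h
    have h1 := (fold_mem_iff Y hL).2 (hL.mem_of_iso e h)
    refine (DP_class hL).retract (DirectSum.lof R ℤ (fun n => Y.X n) 0 ∘ₗ e0.inv.hom)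
      (e0.hom.hom ∘ₗ DirectSum.component R ℤ (fun n => Y.X n) 0) ?_ ?_ ?_ h1
    · intro x
      rw [LinearMap.zero_apply, map_zero]
      change _ = fd Y (DirectSum.lof R ℤ (fun n => Y.X n) 0 (e0.inv x))
      rw [fd_lof Y 0 1 rfl]
      have : Y.d 0 1 = 0 := rfl
      rw [this]; simp
    · intro x
      change e0.hom (fd Y x 0) = 0
      rw [fd_apply Y (-1) 0 (by simp)]
      have : Y.d (-1) 0 = 0 := rfl
      rw [this]; simp
    · intro x
      change e0.hom (DirectSum.component R ℤ (fun n => Y.X n) 0 (DirectSum.lof R ℤ (fun n => Y.X n) 0 (e0.inv x))) = x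
      rw [DirectSum.component.lof_self]
      simp
  · rintro ⟨h, h2⟩
    refine hL.mem_of_iso e.symm (hL.retract (Q.map s) (Q.map r) ?_ h2)
    rw [← Q.map_comp, ← Q.map_id]
    congr 1
    apply HomologicalComplex.from_single_hom_ext
    have hs : s.f 0 = e0.hom ≫ 𝟙 _ := mkHomFromSingle_f _ _
    have hr : r.f 0 = 𝟙 _ ≫ e0.inv := mkHomToSingle_f _ _
    refine (congrArg₂ (fun a b => a ≫ b) hs hr).trans ?_
    change (e0.hom ≫ 𝟙 _) ≫ 𝟙 _ ≫ e0.inv = 𝟙 _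
    simp

end B5



section B6
variable {T : Type u} [Category.{v} T] [Preadditive T]

def FSup {ι : Type w} {f : ι → T} (c : Cofan f) {C : T} (x : C ⟶ c.pt) (F : Finset ι) : Prop :=
  ∀ ⦃Z : T⦄ (w : c.pt ⟶ Z), (∀ k ∈ F, c.inj k ≫ w = 0) → x ≫ w = 0

def FSobj (C : T) : Prop :=
  ∀ ⦃ι : Type w⦄ (f : ι → T) (c : Cofan f), IsColimit c → ∀ x : C ⟶ c.pt, ∃ F, FSup c x F

lemma FSobj_of_compact {C : T} (h : IsCompactObj.{w} C) : FSobj.{w} C := by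
  intro ι f c hc x
  classical
  obtain ⟨p, rfl⟩ := (h f c hc).2 x
  refine ⟨p.support, fun Z w hw => ?_⟩
  unfold cofanHomComparison
  rw [DFinsupp.sumAddHom_apply, DFinsupp.sum, Preadditive.sum_comp]
  refine Finset.sum_eq_zero fun i hi => ?_
  change (p i ≫ c.inj i) ≫ w = 0
  rw [Category.assoc, hw i, comp_zero]
  convert hi

open Classical in
noncomputable def cfE {ι : Type w} {f : ι → T} {c : Cofan f} (hc : IsColimit c) (F : Finset ι) : c.pt ⟶ c.pt :=
  Cofan.IsColimit.desc hc (fun j => if j ∈ F then c.inj j else 0)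

lemma cfE_mem {ι : Type w} {f : ι → T} {c : Cofan f} (hc : IsColimit c) (F : Finset ι) {j : ι} (h : j ∈ F) :
    c.inj j ≫ cfE hc F = c.inj j := by
  rw [cfE, Cofan.IsColimit.fac, if_pos h]

lemma cfE_nmem {ι : Type w} {f : ι → T} {c : Cofan f} (hc : IsColimit c) (F : Finset ι) {j : ι} (h : j ∉ F) :
    c.inj j ≫ cfE hc F = 0 := by
  rw [cfE, Cofan.IsColimit.fac, if_neg h]

lemma FSobj_iso {C C' : T} (e : C ≅ C') (h : FSobj.{w} C) : FSobj.{w} C' := by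
  intro ι f c hc x
  obtain ⟨F, hF⟩ := h f c hc (e.hom ≫ x)
  refine ⟨F, fun Z w hw => ?_⟩
  have := hF w hw
  rw [Category.assoc] at this
  rw [← cancel_epi e.hom, this, comp_zero]

variable [HasZeroObject T] [HasShift T ℤ] [∀ n : ℤ, (shiftFunctor T n).Additive] [Pretriangulated T]

omit [HasZeroObject T] [Pretriangulated T] in
lemma FSobj_shift {C : T} (h : FSobj.{w} C) (n : ℤ) : FSobj.{w} (C⟦n⟧) := by
  intro ι f c hc x
  let S := shiftFunctor T (-n)
  let c' : Cofan (fun i => S.obj (f i)) := Cofan.mk (S.obj c.pt) (fun i => S.map (c.inj i))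
  have hc' : IsColimit c' := isColimitCofanMkObjOfIsColimit S f (fun i => c.inj i)
    (IsColimit.ofIsoColimit hc (Cocone.ext (Iso.refl _) (fun j => by simp; rfl)))
  obtain ⟨F, hF⟩ := h _ c' hc' ((shiftShiftNeg C n).inv ≫ S.map x)
  refine ⟨F, fun Z w hw => ?_⟩
  have := hF (S.map w) (fun k hk => by
    change S.map (c.inj k) ≫ S.map w = 0
    rw [← S.map_comp, hw k hk, S.map_zero])
  apply S.map_injective
  rw [S.map_comp, S.map_zero]
  rw [Category.assoc] at this
  exact (cancel_epi (shiftShiftNeg C n).inv).1 (this.trans comp_zero.symm)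

lemma FSobj_fiber (Tr : Triangle T) (hT : Tr ∈ distTriang T) (h2 : FSobj.{w} Tr.obj₂)
    (h3 : FSobj.{w} Tr.obj₃) : FSobj.{w} Tr.obj₁ := by
  intro ι f c hc x
  classical
  have hT' := inv_rot_of_distTriang _ hT
  have h3' := FSobj_shift h3 (-1)
  let δ : Tr.obj₃⟦(-1 : ℤ)⟧ ⟶ Tr.obj₁ := Tr.invRotate.mor₁
  obtain ⟨F, hF⟩ := h3' f c hc (δ ≫ x)
  have h1 : δ ≫ (x ≫ (𝟙 _ - cfE hc F)) = 0 := by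
    rw [← Category.assoc]
    apply hF
    intro k hk
    rw [Preadditive.comp_sub, Category.comp_id, cfE_mem hc F hk, sub_self]
  have h1' : ∃ y : Tr.obj₂ ⟶ c.pt, x ≫ (𝟙 _ - cfE hc F) = Tr.mor₁ ≫ y :=
    Triangle.yoneda_exact₂ _ hT' _ h1
  obtain ⟨y, hy⟩ := h1'
  obtain ⟨G, hG⟩ := h2 f c hc y
  refine ⟨F ∪ G, fun Z w hw => ?_⟩
  have e1 : cfE hc F ≫ w = 0 := by
    refine Cofan.IsColimit.hom_ext hc _ _ fun k => ?_
    rw [← Category.assoc, comp_zero]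
    by_cases hk : k ∈ F
    · rw [cfE_mem hc F hk, hw k (Finset.mem_union_left _ hk)]
    · rw [cfE_nmem hc F hk, zero_comp]
  have e2 := hG w (fun k hk => hw k (Finset.mem_union_right _ hk))
  have : x ≫ w = (x ≫ (𝟙 _ - cfE hc F)) ≫ w := by
    simp [Preadditive.sub_comp, e1]
  rw [this, hy, Category.assoc, e2, comp_zero]

section fac
variable (W : Set T)

def Fac {C Y : T} (f : C ⟶ Y) : Prop := ∃ K ∈ W, ∃ (a : C ⟶ K) (b : K ⟶ Y), a ≫ b = f

variable {W} (hext : ∀ Tr ∈ distTriang T, Tr.obj₁ ∈ W → Tr.obj₃ ∈ W → Tr.obj₂ ∈ W)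
include hext

lemma Fac.add {C Y : T} {f g : C ⟶ Y} (hf : Fac W f) (hg : Fac W g) : Fac W (f + g) := by
  obtain ⟨K, hK, a, b, rfl⟩ := hf
  obtain ⟨K', hK', a', b', rfl⟩ := hg
  exact ⟨K ⊞ K', hext _ (binaryBiproductTriangle_distinguished K K') hK hK',
    biprod.lift a a', biprod.desc b b', by simp⟩

lemma Fac.cone (Tr : Triangle T) (hT : Tr ∈ distTriang T)
    (hW : ∀ K ∈ W, FSobj.{w} K)
    (h1 : ∀ C, FSobj.{w} C → ∀ f : C ⟶ Tr.obj₁⟦(1 : ℤ)⟧, Fac W f)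
    (h2 : ∀ C, FSobj.{w} C → ∀ f : C ⟶ Tr.obj₂, Fac W f)
    (C : T) (hC : FSobj.{w} C) (f : C ⟶ Tr.obj₃) : Fac W f := by
  obtain ⟨K, hK, a, b, hab⟩ := h1 C hC (f ≫ Tr.mor₃)
  obtain ⟨C', i, δ, hδ⟩ := distinguished_cocone_triangle₁ a
  have hC' : FSobj.{w} C' := FSobj_fiber _ hδ hC (hW K hK)
  have hT' := rot_of_distTriang _ hT
  -- morphism of triangles (i, a, δ) → (mor₂, mor₃, -mor₁[1])
  obtain ⟨ψ, hψ1, hψ2⟩ := complete_distinguished_triangle_morphism₁ _ _ hδ hT' f b hab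
  change C' ⟶ Tr.obj₂ at ψ
  change i ≫ f = ψ ≫ Tr.mor₂ at hψ1
  change δ ≫ ψ⟦(1 : ℤ)⟧' = b ≫ (-(Tr.mor₁⟦(1 : ℤ)⟧')) at hψ2
  obtain ⟨K', hK', p, q, hpq⟩ := h2 C' hC' ψ
  -- the extension
  obtain ⟨E, j, k, hE⟩ := distinguished_cocone_triangle₂ (δ ≫ p⟦(1 : ℤ)⟧')
  have hEW : E ∈ W := hext _ hE hK' hK
  obtain ⟨g, hg1, hg2⟩ := complete_distinguished_triangle_morphism₂ _ _ hδ hE p (𝟙 K)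
    (Category.id_comp (δ ≫ p⟦(1 : ℤ)⟧')).symm
  change C ⟶ E at g
  change i ≫ g = p ≫ j at hg1
  change a ≫ 𝟙 _ = g ≫ k at hg2
  obtain ⟨m, hm1, hm2⟩ := complete_distinguished_triangle_morphism₂ _ _ hE hT' q b (by
    change (δ ≫ p⟦(1 : ℤ)⟧') ≫ q⟦(1 : ℤ)⟧' = b ≫ (-(Tr.mor₁⟦(1 : ℤ)⟧'))
    rw [Category.assoc, ← Functor.map_comp, hpq, hψ2])
  change E ⟶ Tr.obj₃ at m
  change j ≫ m = q ≫ Tr.mor₂ at hm1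
  have hz : i ≫ (f - g ≫ m) = 0 := by
    rw [Preadditive.comp_sub, sub_eq_zero, ← Category.assoc, hg1, Category.assoc, hm1, hψ1,
      ← Category.assoc, hpq]
  obtain ⟨t, ht⟩ := Triangle.yoneda_exact₂ _ hδ (f - g ≫ m) hz
  have e : f = g ≫ m + a ≫ t := by
    have ht' : f - g ≫ m = a ≫ t := ht
    rw [← ht']; abel
  rw [e]
  exact Fac.add hext ⟨E, hEW, g, m, rfl⟩ ⟨K, hK, a, t, rfl⟩

lemma Fac.cofan {ι : Type w} {f : ι → T} (c : Cofan f) (hc : IsColimit c) (h0 : (0 : T) ∈ W)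
    (C : T) (hC : FSobj.{w} C) (h : ∀ i (g : C ⟶ f i), Fac W g) (x : C ⟶ c.pt) : Fac W x := by
  classical
  obtain ⟨F, hF⟩ := hC f c hc x
  let π (k : ι) : c.pt ⟶ f k := Cofan.IsColimit.desc hc (Pi.single k (𝟙 (f k)))
  have hx : x = ∑ k ∈ F, (x ≫ π k) ≫ c.inj k := by
    have := hF (𝟙 _ - ∑ k ∈ F, π k ≫ c.inj k) (fun k hk => by
      rw [Preadditive.comp_sub, sub_eq_zero, Preadditive.comp_sum, Finset.sum_eq_single k]
      · rw [← Category.assoc, Cofan.IsColimit.fac, Pi.single_eq_same]; simp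
      · intro l _ hl
        rw [← Category.assoc, Cofan.IsColimit.fac, Pi.single_eq_of_ne (Ne.symm hl), zero_comp]
      · exact fun h => absurd hk h)
    rw [Preadditive.comp_sub, sub_eq_zero, Preadditive.comp_sum] at this
    simpa using this
  rw [hx]
  clear hx hF
  induction F using Finset.induction_on with
  | empty => exact ⟨0, h0, 0, 0, by simp⟩
  | insert k F hk ih =>
    rw [Finset.sum_insert hk]
    refine Fac.add hext ?_ ih
    obtain ⟨K, hK, a, b, hab⟩ := h k (x ≫ π k)
    exact ⟨K, hK, a, b ≫ c.inj k, by rw [← hab, Category.assoc]⟩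

lemma Fac.localizing (h0 : (0 : T) ∈ W) (hsh : ∀ K ∈ W, ∀ n : ℤ, K⟦n⟧ ∈ W)
    (hW : ∀ K ∈ W, FSobj.{w} K) :
    IsLocalizingSub.{w} {Y : T | ∀ C, FSobj.{w} C → ∀ f : C ⟶ Y, Fac W f} := by
  have hshift : ∀ (n : ℤ) {x : T}, (∀ C, FSobj.{w} C → ∀ f : C ⟶ x, Fac W f) →
      (∀ C, FSobj.{w} C → ∀ f : C ⟶ x⟦n⟧, Fac W f) := by
    intro n x hx C hC f
    let e : (C⟦-n⟧)⟦n⟧ ≅ C := shiftNegShift C n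
    obtain ⟨g, hg⟩ := (shiftFunctor T n).map_surjective (e.hom ≫ f)
    obtain ⟨K, hK, a, b, hab⟩ := hx _ (FSobj_shift hC (-n)) g
    refine ⟨K⟦n⟧, hsh K hK n, e.inv ≫ a⟦n⟧', b⟦n⟧', ?_⟩
    rw [Category.assoc, ← Functor.map_comp, hab, hg, Iso.inv_hom_id_assoc]
  refine ⟨fun C _ f => ⟨0, h0, 0, 0, (isZero_zero T).eq_of_tgt _ _⟩, ?_, hshift, ?_, ?_⟩
  · intro x y e hx C hC f
    obtain ⟨K, hK, a, b, hab⟩ := hx C hC (f ≫ e.inv)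
    exact ⟨K, hK, a, b ≫ e.hom, by rw [← Category.assoc, hab]; simp⟩
  · intro Tr hT h1 h2 C hC f
    exact Fac.cone hext Tr hT hW (hshift 1 h1) h2 C hC f
  · intro ι f c hc h C hC x
    exact Fac.cofan hext c hc h0 C hC (fun i g => h i C hC g) x

end fac
end B6



section B7
open DerivedCategory
variable {R : Type u} [CommRing R]

def FFc (P : CochainComplex (ModuleCat.{u} R) ℤ) : Prop :=
  (∀ i, Module.Free R (P.X i) ∧ Module.Finite R (P.X i)) ∧
    ∃ N : Finset ℤ, ∀ i, i ∉ N → Subsingleton (P.X i)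

lemma FFc_shift {P : CochainComplex (ModuleCat.{u} R) ℤ} (hP : FFc P) (n : ℤ) : FFc (P⟦n⟧) := by
  obtain ⟨h1, N, hN⟩ := hP
  refine ⟨fun i => h1 (i + n), N.image (fun i => i - n), fun i hi => hN (i + n) fun h => hi ?_⟩
  exact Finset.mem_image.2 ⟨i + n, h, by ring⟩

lemma FFc_cone {P P' : CochainComplex (ModuleCat.{u} R) ℤ} (hP : FFc P) (hP' : FFc P') (f : P ⟶ P') :
    FFc (CochainComplex.mappingCone f) := by
  obtain ⟨h1, N, hN⟩ := hP
  obtain ⟨h1', N', hN'⟩ := hP'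
  have e (i : ℤ) : (CochainComplex.mappingCone f).X i ≃ₗ[R] (P.X (i+1) × P'.X i) :=
    (HomologicalComplex.homotopyCofiber.XIsoBiprod f i (i+1) rfl ≪≫
      ModuleCat.biprodIsoProd _ _).toLinearEquiv
  refine ⟨fun i => ?_, N.image (fun i => i - 1) ∪ N', fun i hi => ?_⟩
  · have := h1 (i+1)
    have := h1' i
    obtain ⟨_, _⟩ := h1 (i+1)
    obtain ⟨_, _⟩ := h1' i
    exact ⟨Module.Free.of_equiv (e i).symm, Module.Finite.equiv (e i).symm⟩
  · have a : i + 1 ∉ N := fun h => hi (Finset.mem_union_left _ (Finset.mem_image.2 ⟨i + 1, h, by ring⟩))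
    have b : i ∉ N' := fun h => hi (Finset.mem_union_right _ h)
    have := hN _ a
    have := hN' _ b
    exact (e i).toEquiv.subsingleton

lemma FFc_kproj {P : CochainComplex (ModuleCat.{u} R) ℤ} (hP : FFc P) : P.IsKProjective := by
  obtain ⟨h1, N, hN⟩ := hP
  obtain ⟨b, hb⟩ := N.bddAbove
  have : P.IsStrictlyLE b := by
    rw [CochainComplex.isStrictlyLE_iff]
    intro i hi
    have : Subsingleton (P.X i) := hN i fun h => absurd (hb h) (by omega)
    exact ModuleCat.isZero_of_subsingleton _
  have : ∀ n, Projective (P.X n) := fun n => by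
    have := (h1 n).1
    exact (IsProjective.iff_projective (P.X n)).1 inferInstance
  exact CochainComplex.isKProjective_of_projective P b

variable [HasDerivedCategory.{w'} (ModuleCat.{u} R)]

lemma FFc_lift {P : CochainComplex (ModuleCat.{u} R) ℤ} (hP : FFc P) {Y : CochainComplex (ModuleCat.{u} R) ℤ}
    (f : Q.obj P ⟶ Q.obj Y) : ∃ φ : P ⟶ Y, Q.map φ = f := by
  have := FFc_kproj hP
  obtain ⟨g, hg⟩ := (CochainComplex.IsKProjective.Qh_map_bijective P
    ((HomotopyCategory.quotient _ _).obj Y)).surjective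
    ((quotientCompQhIso _).hom.app P ≫ f ≫ (quotientCompQhIso _).inv.app Y)
  obtain ⟨φ, rfl⟩ := (HomotopyCategory.quotient _ _).map_surjective g
  refine ⟨φ, ?_⟩
  rw [← cancel_epi ((quotientCompQhIso _).hom.app P), ← quotientCompQhIso_hom_naturality, hg]
  simp

def FFq : Set (DerivedCategory (ModuleCat.{u} R)) := {X | ∃ P, FFc P ∧ Nonempty (X ≅ Q.obj P)}

lemma FFq_iso {X Y : DerivedCategory (ModuleCat.{u} R)} (e : X ≅ Y) (h : X ∈ FFq (R := R)) : Y ∈ FFq (R := R) := by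
  obtain ⟨P, hP, ⟨a⟩⟩ := h
  exact ⟨P, hP, ⟨e.symm ≪≫ a⟩⟩

lemma FFq_shift (X : DerivedCategory (ModuleCat.{u} R)) (h : X ∈ FFq (R := R)) (n : ℤ) : X⟦n⟧ ∈ FFq (R := R) := by
  obtain ⟨P, hP, ⟨a⟩⟩ := h
  exact ⟨P⟦n⟧, FFc_shift hP n, ⟨(shiftFunctor _ n).mapIso a ≪≫ ((Q.commShiftIso n).app P).symm⟩⟩

lemma FFq_cone (Tr : Triangle (DerivedCategory (ModuleCat.{u} R))) (hT : Tr ∈ distTriang _)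
    (h1 : Tr.obj₁ ∈ FFq (R := R)) (h2 : Tr.obj₂ ∈ FFq (R := R)) : Tr.obj₃ ∈ FFq (R := R) := by
  obtain ⟨P, hP, ⟨a⟩⟩ := h1
  obtain ⟨P', hP', ⟨b⟩⟩ := h2
  obtain ⟨φ, hφ⟩ := FFc_lift hP (a.inv ≫ Tr.mor₁ ≫ b.hom)
  let T' := (Q.mapTriangle).obj (CochainComplex.mappingCone.triangle φ)
  have hT' : T' ∈ distTriang _ := mappingCone_triangle_distinguished φ
  let e := isoTriangleOfIso₁₂ Tr T' hT hT' a b (by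
    change Tr.mor₁ ≫ b.hom = a.hom ≫ Q.map φ
    rw [hφ, Iso.hom_inv_id_assoc])
  exact ⟨_, FFc_cone hP hP' φ, ⟨Triangle.π₃.mapIso e⟩⟩

lemma FFq_ext (Tr : Triangle (DerivedCategory (ModuleCat.{u} R))) (hT : Tr ∈ distTriang _)
    (h1 : Tr.obj₁ ∈ FFq (R := R)) (h3 : Tr.obj₃ ∈ FFq (R := R)) : Tr.obj₂ ∈ FFq (R := R) :=
  FFq_cone _ (inv_rot_of_distTriang _ hT) (FFq_shift _ h3 (-1)) h1

lemma FFq_smod : smod R (ModuleCat.of R R) ∈ FFq (R := R) := by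
  refine ⟨(HomologicalComplex.single (ModuleCat.{u} R) (ComplexShape.up ℤ) 0).obj (ModuleCat.of R R),
    ⟨fun i => ?_, {0}, fun i hi => ?_⟩, ⟨(singleFunctorIsoCompQ (ModuleCat.{u} R) 0).app _⟩⟩
  · by_cases h : i = 0
    · subst h
      let e := (HomologicalComplex.singleObjXSelf (ComplexShape.up ℤ) 0 (ModuleCat.of R R)).toLinearEquiv
      exact ⟨Module.Free.of_equiv e.symm, Module.Finite.equiv e.symm⟩
    · have := ModuleCat.subsingleton_of_isZero (HomologicalComplex.isZero_single_obj_X (ComplexShape.up ℤ) 0 (ModuleCat.of R R) i h)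
      exact ⟨inferInstance, inferInstance⟩
  · exact ModuleCat.subsingleton_of_isZero (HomologicalComplex.isZero_single_obj_X (ComplexShape.up ℤ) 0 (ModuleCat.of R R) i (by simpa using hi))

lemma FFq_zero : (0 : DerivedCategory (ModuleCat.{u} R)) ∈ FFq (R := R) := by
  have h := FFq_cone _ (contractible_distinguished (smod R (ModuleCat.of R R))) FFq_smod FFq_smod
  exact h

lemma FFc_supp {P : CochainComplex (ModuleCat.{u} R) ℤ} (hP : FFc P) {ι : Type u}
    (X : ι → CochainComplex (ModuleCat.{u} R) ℤ) (φ : P ⟶ dsC X) :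
    ∃ F : Finset ι, ∀ k, k ∉ F → ∀ i (x : P.X i), dsP X k i (φ.f i x) = 0 := by
  classical
  obtain ⟨h1, N, hN⟩ := hP
  have h (i : ℤ) : ∃ F : Finset ι, ∀ k, k ∉ F → ∀ (x : P.X i), dsP X k i (φ.f i x) = 0 := by
    obtain ⟨s, hs⟩ := (h1 i).2.fg_top
    choose F hF using fun x : P.X i => dsP_fin X i (φ.f i x)
    refine ⟨s.biUnion F, fun k hk x => ?_⟩
    have hx : x ∈ Submodule.span R (s : Set (P.X i)) := hs ▸ Submodule.mem_top
    induction hx using Submodule.span_induction with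
    | mem x hx => exact hF x k fun h => hk (Finset.mem_biUnion.2 ⟨x, hx, h⟩)
    | zero => simp
    | add x y _ _ hx hy => rw [map_add, map_add, hx, hy, add_zero]
    | smul a x _ hx => rw [map_smul, map_smul, hx, smul_zero]
  choose F hF using h
  refine ⟨N.biUnion F, fun k hk i x => ?_⟩
  by_cases hi : i ∈ N
  · exact hF i k (fun h => hk (Finset.mem_biUnion.2 ⟨i, hi, h⟩)) x
  · have := hN i hi
    rw [Subsingleton.elim x 0]; simp

lemma FFq_FS (K : DerivedCategory (ModuleCat.{u} R)) (hK : K ∈ FFq (R := R)) : FSobj.{u} K := by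
  classical
  obtain ⟨P, hP, ⟨a⟩⟩ := hK
  refine FSobj_iso a.symm ?_
  intro ι f c hc x
  obtain ⟨X, e, ⟨hc'⟩⟩ := exists_cofan f
  let θ := hc.coconePointUniqueUpToIso hc'
  have hθ (k : ι) : c.inj k ≫ θ.hom = (e k).hom ≫ Q.map (dsInj X k) :=
    hc.comp_coconePointUniqueUpToIso_hom hc' ⟨k⟩
  change c.pt ≅ Q.obj (dsC X) at θ
  obtain ⟨φ, hφ⟩ := FFc_lift hP (x ≫ θ.hom)
  obtain ⟨F, hF⟩ := FFc_supp hP X φ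
  let ε : dsC X ⟶ dsC X := dsDesc X (fun k => if k ∈ F then dsInj X k else 0)
  have hε (k : ι) : dsInj X k ≫ ε = if k ∈ F then dsInj X k else 0 := dsInj_desc _ _ _
  have h1 : φ ≫ ε = φ := by
    ext i x
    change ε.f i (φ.f i x) = φ.f i x
    have hs := dsC_sum X i (φ.f i x) F (fun k hk => hF k hk i x)
    rw [hs, map_sum]
    refine Finset.sum_congr rfl fun k hk => ?_
    have := hε k
    rw [if_pos hk] at this
    have h2 := congrArg (fun g => g.f i (dsP X k i (φ.f i x))) this
    exact h2
  refine ⟨F, fun Z w hw => ?_⟩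
  have h2 : Q.map ε ≫ θ.inv ≫ w = 0 := by
    refine Cofan.IsColimit.hom_ext hc' _ _ fun k => ?_
    change ((e k).hom ≫ Q.map (dsInj X k)) ≫ Q.map ε ≫ θ.inv ≫ w = _
    rw [comp_zero, Category.assoc, ← Q.map_comp_assoc, hε]
    split_ifs with hk
    · have := hθ k
      rw [← Category.assoc, ← this]
      simp [hw k hk]
    · simp
  have h3 : x = Q.map φ ≫ θ.inv := by rw [hφ]; simp
  rw [h3, ← h1, Q.map_comp, Category.assoc, Category.assoc, h2, comp_zero]

lemma all_mem_loc (X : DerivedCategory (ModuleCat.{u} R)) : X ∈ Loc.{u} {smod R (ModuleCat.of R R)} := by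
  have hL := Loc_isLocalizing (R := R) {smod R (ModuleCat.of R R)}
  refine hL.mem_of_iso (Q.objObjPreimageIso X) ((fold_mem_iff (Q.objPreimage X) hL).1 ?_)
  exact (DP_class hL).all_of_self ((smod_mem_iff hL R).1 (subset_Loc _ rfl)) (fd_sq _)

lemma compact_retract (C : DerivedCategory (ModuleCat.{u} R)) (hC : IsCompactObj.{u} C) :
    ∃ P, FFc P ∧ ∃ (s : C ⟶ Q.obj P) (r : Q.obj P ⟶ C), s ≫ r = 𝟙 C := by
  have hL := Fac.localizing.{u} (W := FFq (R := R)) FFq_ext FFq_zero FFq_shift FFq_FS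
  have h : Loc.{u} {smod R (ModuleCat.of R R)} ⊆ _ := Loc_subset hL (by
    rintro _ rfl C hC f
    exact ⟨_, FFq_smod, f, 𝟙 _, Category.comp_id _⟩)
  obtain ⟨K, ⟨P, hP, ⟨a⟩⟩, s, r, hsr⟩ := h (all_mem_loc C) C (FSobj_of_compact hC) (𝟙 C)
  exact ⟨P, hP, s ≫ a.hom, a.inv ≫ r, by simpa using hsr⟩

end B7



section B8
variable {T : Type u} [Category.{v} T] [Preadditive T] [HasZeroObject T]
  [HasShift T ℤ] [∀ n : ℤ, (shiftFunctor T n).Additive] [Pretriangulated T]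

lemma cone_trick {C K Z : T} (s : C ⟶ K) (r : K ⟶ C) (hsr : s ≫ r = 𝟙 C) (j : K ⟶ Z) (δ : Z ⟶ K⟦(1 : ℤ)⟧)
    (hT : Triangle.mk (𝟙 K - r ≫ s) j δ ∈ distTriang T) :
    (∃ (a : C ⟶ Z) (b : Z ⟶ C), a ≫ b = 𝟙 C) ∧ ∃ (a : Z ⟶ C ⊞ C⟦(1 : ℤ)⟧) (b : C ⊞ C⟦(1 : ℤ)⟧ ⟶ Z), a ≫ b = 𝟙 Z := by
  have h1 : (𝟙 K - r ≫ s) ≫ r = 0 := by simp [Preadditive.sub_comp, hsr]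
  have h2 : s ≫ (𝟙 K - r ≫ s) = 0 := by simp [Preadditive.comp_sub, reassoc_of% hsr]
  have ht : ∃ t : Z ⟶ C, r = j ≫ t := Triangle.yoneda_exact₂ _ hT r h1
  obtain ⟨t, ht⟩ := ht
  have hv : ∃ v : C⟦(1 : ℤ)⟧ ⟶ Z, s⟦(1 : ℤ)⟧' = v ≫ δ := by
    refine Triangle.coyoneda_exact₁ _ hT (s⟦(1 : ℤ)⟧') ?_
    change s⟦(1 : ℤ)⟧' ≫ (𝟙 K - r ≫ s)⟦(1 : ℤ)⟧' = 0
    rw [← Functor.map_comp, h2, Functor.map_zero]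
  obtain ⟨v, hv⟩ := hv
  have z1 : (𝟙 K - r ≫ s) ≫ j = 0 := comp_distTriang_mor_zero₁₂ _ hT
  have z2 : j ≫ δ = 0 := comp_distTriang_mor_zero₂₃ _ hT
  have z3 : δ ≫ (𝟙 K - r ≫ s)⟦(1 : ℤ)⟧' = 0 := comp_distTriang_mor_zero₃₁ _ hT
  have w1 : r ≫ s ≫ j = j := by
    rw [Preadditive.sub_comp, Category.id_comp, sub_eq_zero, Category.assoc] at z1
    exact z1.symm
  have w3 : δ ≫ r⟦(1 : ℤ)⟧' ≫ s⟦(1 : ℤ)⟧' = δ := by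
    rw [Functor.map_sub, CategoryTheory.Functor.map_id, Preadditive.comp_sub, Category.comp_id, sub_eq_zero,
      Functor.map_comp] at z3
    exact z3.symm
  refine ⟨⟨s ≫ j, t, by rw [Category.assoc, ← ht, hsr]⟩, ?_⟩
  let h : Z ⟶ Z := t ≫ s ≫ j + δ ≫ r⟦(1 : ℤ)⟧' ≫ v
  have hj : j ≫ h = j := by
    simp only [h, Preadditive.comp_add]
    rw [← Category.assoc, ← ht, w1, ← Category.assoc, z2, zero_comp, add_zero]
  have hd : h ≫ δ = δ := by
    simp only [h, Preadditive.add_comp, Category.assoc]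
    rw [z2, comp_zero, comp_zero, zero_add, ← hv, w3]
  let φ : Triangle.mk (𝟙 K - r ≫ s) j δ ⟶ Triangle.mk (𝟙 K - r ≫ s) j δ :=
    Triangle.homMk _ _ (𝟙 K) (𝟙 K) h ((Category.comp_id _).trans (Category.id_comp _).symm)
      (hj.trans (Category.id_comp _).symm)
      (((congrArg (fun g => δ ≫ g) (CategoryTheory.Functor.map_id _ _)).trans (Category.comp_id _)).trans hd.symm)
  have hh : IsIso h := isIso₃_of_isIso₁₂ φ hT hT (inferInstanceAs (IsIso (𝟙 K))) (inferInstanceAs (IsIso (𝟙 K)))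
  refine ⟨biprod.lift t (δ ≫ r⟦(1 : ℤ)⟧'), biprod.desc (s ≫ j) v ≫ inv h, ?_⟩
  rw [← Category.assoc, biprod.lift_desc, IsIso.comp_inv_eq, Category.id_comp, Category.assoc]

end B8

section B8b
open DerivedCategory
variable {R : Type u} [CommRing R] [HasDerivedCategory.{w'} (ModuleCat.{u} R)]

lemma compact_cone (C : DerivedCategory (ModuleCat.{u} R)) (hC : IsCompactObj.{u} C) :
    ∃ P, FFc P ∧ ∀ L, IsLocalizingSub.{u} L → (C ∈ L ↔ Q.obj P ∈ L) := by
  obtain ⟨P, hP, s, r, hsr⟩ := compact_retract C hC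
  obtain ⟨φ, hφ⟩ := FFc_lift hP (𝟙 _ - r ≫ s)
  have hT := mappingCone_triangle_distinguished φ
  refine ⟨_, FFc_cone hP hP φ, fun L hL => ?_⟩
  obtain ⟨_, δ, hδ⟩ : ∃ (j : Q.obj P ⟶ Q.obj (CochainComplex.mappingCone φ)) (δ : Q.obj (CochainComplex.mappingCone φ) ⟶ (Q.obj P)⟦(1 : ℤ)⟧),
      Triangle.mk (𝟙 (Q.obj P) - r ≫ s) j δ ∈ distTriang _ := by
    rw [← hφ]
    exact ⟨_, _, hT⟩
  obtain ⟨⟨a, b, hab⟩, c, d, hcd⟩ := cone_trick s r hsr _ _ hδ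
  constructor
  · intro h
    exact hL.retract c d hcd (hL.ext₂ _ (binaryBiproductTriangle_distinguished C (C⟦(1 : ℤ)⟧)) h (hL.shift_mem 1 h))
  · intro h
    exact hL.retract a b hab h

end B8b



section B9
open DirectSum
variable {R : Type u} [CommRing R]

lemma FFc_basis {P : CochainComplex (ModuleCat.{u} R) ℤ} (hP : FFc P) :
    ∃ n : ℤ → ℕ, Finite (Σ i : ℤ, Fin (n i)) ∧ ∀ i, Nonempty (Module.Basis (Fin (n i)) R (P.X i)) := by
  classical
  obtain ⟨h1, N, hN⟩ := hP
  have h (i : ℤ) : ∃ n : ℕ, (i ∉ N → n = 0) ∧ Nonempty (Module.Basis (Fin n) R (P.X i)) := by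
    by_cases hi : i ∈ N
    · have := (h1 i).1
      have := (h1 i).2
      exact ⟨_, fun h => absurd hi h, ⟨(Module.Free.chooseBasis R (P.X i)).reindex (Fintype.equivFin _)⟩⟩
    · have := hN i hi
      exact ⟨0, fun _ => rfl, ⟨Module.Basis.empty _⟩⟩
  choose n hn hb using h
  refine ⟨n, ?_, hb⟩
  have hm (x : Σ i : ℤ, Fin (n i)) : x.1 ∈ N := by
    by_contra hx
    exact (Fin.cast (hn _ hx) x.2).elim0
  refine Finite.of_injective (β := Σ i : N, Fin (n i)) (fun x => ⟨⟨x.1, hm x⟩, x.2⟩) ?_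
  rintro ⟨i, x⟩ ⟨j, y⟩ h
  simp only [Sigma.mk.injEq, Subtype.mk.injEq] at h
  obtain ⟨rfl, h⟩ := h
  rw [eq_of_heq h]

lemma FFc_matrix {P : CochainComplex (ModuleCat.{u} R) ℤ} (hP : FFc P) :
    ∃ (ι : Type) (_ : Fintype ι) (_ : DecidableEq ι) (D : Matrix ι ι R) (e : (⨁ i : ℤ, P.X i) ≃ₗ[R] (ι → R)),
      D * D = 0 ∧ GradedMat D ∧ ∀ x, e (fd P x) = matAct D R (e x) := by
  classical
  obtain ⟨n, hn, hb⟩ := FFc_basis hP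
  have b (i : ℤ) := (hb i).some
  let B : Module.Basis (Σ i : ℤ, Fin (n i)) R (⨁ i : ℤ, P.X i) := DFinsupp.basis b
  have hft : Fintype (Σ i : ℤ, Fin (n i)) := Fintype.ofFinite _
  refine ⟨_, hft, inferInstance, LinearMap.toMatrix B B (fd P), B.equivFun, ?_, ?_, ?_⟩
  · rw [← LinearMap.toMatrix_comp]
    have : fd P ∘ₗ fd P = 0 := LinearMap.ext fun x => fd_sq P x
    rw [this, map_zero]
  · refine ⟨fun a => a.1, fun a c h => ?_⟩
    by_contra hne
    apply h
    rw [LinearMap.toMatrix_apply]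
    have h1 : B.repr (fd P (B c)) a = (b a.1).repr ((fd P (B c)) a.1) a.2 := rfl
    rw [h1, fd_apply P (a.1 - 1) a.1 (by simp)]
    have h3 : (B c) (a.1 - 1) = 0 := by
      apply (b (a.1 - 1)).repr.injective
      ext k
      have h4 : (b (a.1 - 1)).repr ((B c) (a.1 - 1)) k = B.repr (B c) ⟨a.1 - 1, k⟩ := rfl
      rw [h4, B.repr_self, map_zero, Finsupp.single_eq_of_ne]
      · rfl
      · rintro h
        have h5 := congrArg Sigma.fst h
        apply hne
        change a.1 = c.1 + 1
        simp only at h5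
        omega
    rw [h3, map_zero, map_zero]; rfl
  · intro x
    ext a
    rw [matAct_apply]
    have := congrFun (LinearMap.toMatrix_mulVec_repr B B (fd P) x) a
    rw [Module.Basis.equivFun_apply, ← this]
    rfl

end B9

section B9b
open DerivedCategory

theorem loc_compact_aux (R : Type u) [CommRing R] [HasDerivedCategory.{w'} (ModuleCat.{u} R)]
    (C : DerivedCategory (ModuleCat.{u} R)) (hC : IsCompactObj.{u} C) :
    ∃ I : Ideal R, I.FG ∧ Loc.{u} {C} = Loc.{u} {smod R (ModuleCat.of R (R ⧸ I))} := by
  obtain ⟨P, hP, hCP⟩ := compact_cone C hC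
  obtain ⟨ι, _, _, D, e, hD, hg, he⟩ := FFc_matrix hP
  have he' (x : ι → R) : e.symm (matAct D R x) = fd P (e.symm x) := by
    rw [LinearEquiv.symm_apply_eq, he, LinearEquiv.apply_symm_apply]
  have hsq (x : ι → R) : matAct D R (matAct D R x) = 0 := by
    rw [← matAct_mul, hD, matAct_zero]
  have key (L) (hL : IsLocalizingSub.{u} L) : C ∈ L ↔ DP L (ι → R) (matAct D R) := by
    rw [hCP L hL, ← fold_mem_iff P hL]
    constructor
    · intro h
      exact (DP_class hL).of_equiv e he h
    · intro h
      exact (DP_class hL).of_equiv e.symm he' h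
  have hL := Loc_isLocalizing (R := R) {C}
  have h1 := (key _ hL).1 (subset_Loc _ rfl)
  obtain ⟨B, hB1, hB2⟩ := main_alg _ _ R _ (DP_class hL) ι D le_rfl le_rfl hD hg
    (fun M _ _ => (DP_class hL).mat_all D hD hg h1 M)
  refine ⟨Ideal.span B, ⟨B, rfl⟩, Set.Subset.antisymm ?_ ?_⟩
  · have hL' := Loc_isLocalizing (R := R) {smod R (ModuleCat.of R (R ⧸ Ideal.span (B : Set R)))}
    refine Loc_subset hL' ?_
    rintro _ rfl
    have h0 := (smod_mem_iff hL' _).1 (subset_Loc _ rfl)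
    refine (key _ hL').2 ((DP_class hL').fin_htpy B (fun M _ _ d hd hM =>
      (DP_class hL').killed_of_quot (B : Set R) h0 M d hd hM) B _ _ hsq fun x hx => Or.inr ⟨hx, ?_⟩)
    obtain ⟨n, h, hh⟩ := hB1 x hx
    refine ⟨n, matAct h R, fun m => ?_⟩
    rw [← matAct_mul, ← matAct_mul, ← matAct_add, ← hh, matAct_smul, matAct_one]
  · refine Loc_subset hL ?_
    rintro _ rfl
    refine (smod_mem_iff hL _).2 (hB2 _ fun x hx m => ?_)
    obtain ⟨s, rfl⟩ := Ideal.Quotient.mk_surjective m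
    rw [← Ideal.Quotient.mk_eq_mk, ← Submodule.Quotient.mk_smul, Submodule.Quotient.mk_eq_zero, smul_eq_mul]
    exact Ideal.mul_mem_right _ _ (Ideal.subset_span hx)

end B9b


/-- Theorem: for any compact object `C` of `D(R)` (i.e. perfect complex), there is a
finitely generated ideal `I ⊆ R` such that `Loc(C) = Loc(R/I)`. -/
theorem loc_compact_eq_loc_quotient (R : Type u) [CommRing R]
    [HasDerivedCategory.{w'} (ModuleCat.{u} R)]
    (C : DerivedCategory (ModuleCat.{u} R)) (hC : IsCompactObj.{u} C) :
    ∃ I : Ideal R, I.FG ∧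
      Loc.{u} {C} = Loc.{u} {smod R (ModuleCat.of R (R ⧸ I))} := by
  exact loc_compact_aux R C hC
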